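/- arXiv:1109.3676 — 6 statements merged into one kernel-verified Lean document; each statement's English description precedes it below -/
import Mathlib

section
/- Let d ≥ 3 be an integer and assume condition (A-1) holds with index α = 2 and condition (A-3) holds. Then the radial profile of the Green function of the subordinate Brownian motion satisfies g(r) ≍ r^{−d+2} / φ'(r^{−2}) as r → 0+, and also g(r) ≍ r^{−d} / φ(r^{−2}) as r → 0+. -/
open MeasureTheory Set Filter Topology

lemma sbm_mu_int (μ : ℝ → ℝ)
    (hμpos : ∀ t, 0 < t → 0 < μ t)
    (hμdec : ∀ s t, 0 < s → s ≤ t → μ t ≤ μ s)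
    (hμint : IntegrableOn (fun t => min 1 t * μ t) (Ioi 0))
    (w : ℝ → ℝ) (hw : Measurable w) (C : ℝ)
    (hb : ∀ t, 0 < t → |w t| ≤ C * min 1 t) :
    IntegrableOn (fun t => w t * μ t) (Ioi 0) := by
  have hm : AEMeasurable μ (volume.restrict (Ioi (0:ℝ))) :=
    aemeasurable_restrict_of_antitoneOn measurableSet_Ioi
      (fun s hs t _ hst => hμdec s t hs hst)
  refine Integrable.mono' (hμint.const_mul C) (hw.aemeasurable.mul hm).aestronglyMeasurable ?_
  filter_upwards [ae_restrict_mem measurableSet_Ioi] with t ht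
  have h1 := hμpos t ht
  rw [Real.norm_eq_abs, abs_mul, abs_of_pos h1, ← mul_assoc]
  exact mul_le_mul_of_nonneg_right (hb t ht) h1.le

lemma sbm_int_phi (μ : ℝ → ℝ)
    (hμpos : ∀ t, 0 < t → 0 < μ t)
    (hμdec : ∀ s t, 0 < s → s ≤ t → μ t ≤ μ s)
    (hμint : IntegrableOn (fun t => min 1 t * μ t) (Ioi 0)) (l : ℝ) (hl : 0 < l) :
    IntegrableOn (fun t => (1 - Real.exp (-(l * t))) * μ t) (Ioi 0) := by
  refine sbm_mu_int μ hμpos hμdec hμint _ (by fun_prop) (max 1 l) ?_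
  intro t ht
  have hlt : 0 < l * t := mul_pos hl ht
  have h1 := Real.add_one_le_exp (-(l * t))
  have h2 : Real.exp (-(l * t)) ≤ 1 := Real.exp_le_one_iff.2 (by linarith)
  have h3 := Real.exp_pos (-(l * t))
  rw [abs_of_nonneg (by linarith)]
  rcases min_cases 1 t with ⟨h, _⟩ | ⟨h, _⟩ <;> rw [h]
  · have := le_max_left 1 l
    linarith
  · have := mul_le_mul_of_nonneg_right (le_max_right 1 l) ht.le
    linarith

lemma sbm_int_phi' (μ : ℝ → ℝ)
    (hμpos : ∀ t, 0 < t → 0 < μ t)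
    (hμdec : ∀ s t, 0 < s → s ≤ t → μ t ≤ μ s)
    (hμint : IntegrableOn (fun t => min 1 t * μ t) (Ioi 0)) (l : ℝ) (hl : 0 < l) :
    IntegrableOn (fun t => t * Real.exp (-(l * t)) * μ t) (Ioi 0) := by
  refine sbm_mu_int μ hμpos hμdec hμint _ (by fun_prop) (max 1 (1 / l)) ?_
  intro t ht
  have hlt : 0 < l * t := mul_pos hl ht
  have h2 : Real.exp (-(l * t)) ≤ 1 := Real.exp_le_one_iff.2 (by linarith)
  have h3 := Real.exp_pos (-(l * t))
  rw [abs_of_nonneg (by positivity)]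
  rcases min_cases 1 t with ⟨h, _⟩ | ⟨h, _⟩ <;> rw [h]
  · have := le_max_right 1 (1 / l)
    have h4 : t * Real.exp (-(l * t)) ≤ 1 / l := by
      rw [le_div_iff₀ hl, Real.exp_neg, mul_right_comm, ← div_eq_mul_inv, div_le_one (Real.exp_pos _)]
      have := Real.add_one_le_exp (l * t)
      linarith
    linarith
  · have := mul_le_mul_of_nonneg_right (le_max_left 1 (1 / l)) ht.le
    nlinarith

lemma sbm_setInt_pos (f : ℝ → ℝ) (hf : IntegrableOn f (Ioi 0)) (hp : ∀ t, 0 < t → 0 < f t) :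
    0 < ∫ t in Ioi (0:ℝ), f t := by
  rw [setIntegral_pos_iff_support_of_nonneg_ae _ hf]
  · have : Function.support f ∩ Ioi 0 = Ioi 0 := by
      ext t; simp only [mem_inter_iff, Function.mem_support, mem_Ioi, and_iff_right_iff_imp]
      intro h; exact (hp t h).ne'
    rw [this]; simp
  · filter_upwards [ae_restrict_mem measurableSet_Ioi] with t ht
    exact (hp t ht).le

/-- all needed facts about φ -/
lemma sbm_phi_facts (μ φ φ' : ℝ → ℝ)
    (hμpos : ∀ t, 0 < t → 0 < μ t)
    (hμdec : ∀ s t, 0 < s → s ≤ t → μ t ≤ μ s)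
    (hμint : IntegrableOn (fun t => min 1 t * μ t) (Ioi 0))
    (hφ : ∀ l, 0 < l → φ l = ∫ t in Ioi (0:ℝ), (1 - Real.exp (-(l * t))) * μ t)
    (hφ' : ∀ l, 0 < l → φ' l = ∫ t in Ioi (0:ℝ), t * Real.exp (-(l * t)) * μ t) :
    (∀ l, 0 < l → 0 < φ l) ∧ (∀ l, 0 < l → 0 < φ' l) ∧
    (∀ l m, 0 < l → l ≤ m → φ l ≤ φ m) ∧ (∀ l m, 0 < l → l ≤ m → φ' m ≤ φ' l) ∧
    (∀ l, 0 < l → l * φ' l ≤ φ l) ∧ (∀ l, 0 < l → φ (2 * l) ≤ φ l + l * φ' l) := by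
  have I1 := sbm_int_phi μ hμpos hμdec hμint
  have I2 := sbm_int_phi' μ hμpos hμdec hμint
  refine ⟨?_, ?_, ?_, ?_, ?_, ?_⟩
  · intro l hl
    rw [hφ l hl]
    refine sbm_setInt_pos _ (I1 l hl) fun t ht => mul_pos ?_ (hμpos t ht)
    have : Real.exp (-(l * t)) < 1 := Real.exp_lt_one_iff.2 (by have := mul_pos hl ht; linarith)
    linarith
  · intro l hl
    rw [hφ' l hl]
    exact sbm_setInt_pos _ (I2 l hl) fun t ht =>
      mul_pos (mul_pos ht (Real.exp_pos _)) (hμpos t ht)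
  · intro l m hl hlm
    rw [hφ l hl, hφ m (hl.trans_le hlm)]
    refine setIntegral_mono_on (I1 l hl) (I1 m (hl.trans_le hlm)) measurableSet_Ioi ?_
    intro t (ht : 0 < t)
    have h1 := hμpos t ht
    gcongr
  · intro l m hl hlm
    rw [hφ' l hl, hφ' m (hl.trans_le hlm)]
    refine setIntegral_mono_on (I2 m (hl.trans_le hlm)) (I2 l hl) measurableSet_Ioi ?_
    intro t (ht : 0 < t)
    have h1 := hμpos t ht
    gcongr
  · intro l hl
    rw [hφ l hl, hφ' l hl, ← integral_const_mul]
    refine setIntegral_mono_on ((I2 l hl).const_mul l) (I1 l hl) measurableSet_Ioi ?_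
    intro t (ht : 0 < t)
    have h1 := hμpos t ht
    rw [← mul_assoc]
    refine mul_le_mul_of_nonneg_right ?_ h1.le
    have h2 := Real.add_one_le_exp (l * t)
    have h3 := Real.exp_pos (-(l * t))
    have h4 : Real.exp (l * t) * Real.exp (-(l * t)) = 1 := by rw [← Real.exp_add]; simp
    nlinarith
  · intro l hl
    rw [hφ l hl, hφ' l hl, hφ (2 * l) (by linarith), ← integral_const_mul,
      ← integral_add (I1 l hl) ((I2 l hl).const_mul l)]
    refine setIntegral_mono_on (I1 _ (by linarith)) ((I1 l hl).add ((I2 l hl).const_mul l))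
      measurableSet_Ioi ?_
    intro t (ht : 0 < t)
    have h1 := hμpos t ht
    have h2 := Real.add_one_le_exp (-(l * t))
    have h3 := Real.exp_pos (-(l * t))
    have h4 : Real.exp (-(2 * l * t)) = Real.exp (-(l * t)) * Real.exp (-(l * t)) := by
      rw [← Real.exp_add]; ring_nf
    have : (1 - Real.exp (-(2 * l * t))) ≤
        (1 - Real.exp (-(l * t))) + l * (t * Real.exp (-(l * t))) := by
      rw [h4]; nlinarith
    have := mul_le_mul_of_nonneg_right this h1.le
    linarith

lemma sbm_karamata (φ φ' : ℝ → ℝ)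
    (h2 : ∀ l, 0 < l → 0 < φ' l)
    (h3 : ∀ l m, 0 < l → l ≤ m → φ l ≤ φ m) (h4 : ∀ l m, 0 < l → l ≤ m → φ' m ≤ φ' l)
    (h6 : ∀ l, 0 < l → φ (2 * l) ≤ φ l + l * φ' l)
    (hA1 : ∀ x, 0 < x → Tendsto (fun l => φ' (l * x) / φ' l) atTop (𝓝 (1 : ℝ))) :
    ∃ C L : ℝ, 0 < C ∧ 0 < L ∧ ∀ l, L ≤ l → φ l ≤ C * (l * φ' l) := by
  have e := (hA1 2 two_pos).eventually (lt_mem_nhds (show (2/3 : ℝ) < 1 by norm_num))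
  obtain ⟨L0, hL0⟩ := eventually_atTop.1 e
  set L := max L0 1 with hL
  have hLp : 0 < L := lt_of_lt_of_le one_pos (le_max_right _ _)
  have key : ∀ l, L ≤ l → φ' l ≤ 3/2 * φ' (2 * l) := by
    intro l hl
    have := hL0 l ((le_max_left _ _).trans hl)
    rw [lt_div_iff₀ (h2 l (hLp.trans_le hl)), mul_comm l 2] at this
    linarith
  set C := max 3 (φ (2 * L) / (L * φ' (2 * L))) with hC
  have hC3 : 3 ≤ C := le_max_left _ _
  refine ⟨C, L, by linarith, hLp, ?_⟩
  have base : ∀ l, L ≤ l → l ≤ 2 * L → φ l ≤ C * (l * φ' l) := by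
    intro l hl hl2
    have a := h3 l _ (hLp.trans_le hl) hl2
    have b := h4 l _ (hLp.trans_le hl) hl2
    have p := h2 (2 * L) (by linarith)
    have c : φ (2 * L) ≤ C * (L * φ' (2 * L)) := by
      rw [← div_le_iff₀ (by positivity)]; exact le_max_right _ _
    have : L * φ' (2 * L) ≤ l * φ' l := mul_le_mul hl b p.le (by linarith)
    nlinarith
  have step : ∀ n : ℕ, ∀ l, L ≤ l → l ≤ 2 ^ (n + 1) * L → φ l ≤ C * (l * φ' l) := by
    intro n
    induction n with
    | zero => intro l hl hl2; exact base l hl (by simpa using hl2)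
    | succ n ih =>
      intro l hl hl2
      rcases le_total l (2 * L) with h | h
      · exact base l hl h
      · have i := ih (l / 2) (by linarith) (by rw [pow_succ] at hl2; linarith)
        have k := key (l / 2) (by linarith)
        have s := h6 (l / 2) (by linarith)
        rw [mul_div_cancel₀ l (two_ne_zero)] at k s
        have hl0 : 0 < l := by linarith
        have q := h2 l hl0
        have q2 : l * φ' (l / 2) ≤ l * (3/2 * φ' l) := mul_le_mul_of_nonneg_left k hl0.le
        have lq : 0 < l * φ' l := by positivity
        have : C * (l * φ' (l/2)) ≤ C * (l * (3/2 * φ' l)) :=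
          mul_le_mul_of_nonneg_left q2 (by linarith)
        nlinarith
  intro l hl
  obtain ⟨n, hn⟩ := pow_unbounded_of_one_lt (l / L) (one_lt_two)
  refine step n l hl ?_
  rw [div_lt_iff₀ hLp] at hn
  have : (0:ℝ) < 2 ^ n * L := by positivity
  rw [pow_succ]; linarith

lemma sbm_ratio (φ φ' : ℝ → ℝ)
    (h2 : ∀ l, 0 < l → 0 < φ' l)
    (h5 : ∀ l, 0 < l → l * φ' l ≤ φ l)
    (hA1 : ∀ x, 0 < x → Tendsto (fun l => φ' (l * x) / φ' l) atTop (𝓝 (1 : ℝ)))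
    (C L : ℝ) (hC : 0 < C) (hL : 0 < L) (hCL : ∀ l, L ≤ l → φ l ≤ C * (l * φ' l)) :
    ∃ K M : ℝ, 0 < K ∧ 0 < M ∧ ∀ l, M ≤ l → 3 * φ l ≤ φ (K * l) := by
  have hK : 0 < 6 * C := by linarith
  have e := (hA1 (6 * C) hK).eventually (lt_mem_nhds (show (1/2 : ℝ) < 1 by norm_num))
  obtain ⟨L0, hL0⟩ := eventually_atTop.1 e
  refine ⟨6 * C, max L0 L, hK, lt_of_lt_of_le hL (le_max_right _ _), ?_⟩
  intro l hl
  have hl0 : 0 < l := hL.trans_le ((le_max_right _ _).trans hl)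
  have a := hL0 l ((le_max_left _ _).trans hl)
  rw [lt_div_iff₀ (h2 l hl0), mul_comm l] at a
  have b := h5 (6 * C * l) (by positivity)
  have c := hCL l ((le_max_right _ _).trans hl)
  have := mul_lt_mul_of_pos_left a (show 0 < 6 * C * l by positivity)
  linarith

lemma sbm_u_upper (φ u : ℝ → ℝ)
    (hupos : ∀ t, 0 < t → 0 < u t)
    (hudec : ∀ s t, 0 < s → s ≤ t → u t ≤ u s)
    (huI : ∀ l, 0 < l → IntegrableOn (fun t => Real.exp (-(l * t)) * u t) (Ioi 0))
    (hu : ∀ l, 0 < l → ∫ t in Ioi (0:ℝ), Real.exp (-(l * t)) * u t = 1 / φ l)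
    (t T : ℝ) (ht : 0 < t) (htT : t ≤ T) :
    u t ≤ 3 / φ (1 / T) / t := by
  have hT : 0 < T := ht.trans_le htT
  have hl : 0 < 1 / T := by positivity
  have h1 : ∫ s in Ioc 0 t, (1/3) * u t ≤ 1 / φ (1 / T) := by
    rw [← hu _ hl]
    refine (setIntegral_mono_on ?_ ((huI _ hl).mono_set Ioc_subset_Ioi_self) measurableSet_Ioc ?_).trans
      (setIntegral_mono_set (huI _ hl) ?_ Ioc_subset_Ioi_self.eventuallyLE)
    · exact integrableOn_const (by simp) (by finiteness)
    · intro s hs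
      have a := hudec s t hs.1 hs.2
      have b : (1/3:ℝ) ≤ Real.exp (-(1 / T * s)) := by
        rw [Real.exp_neg, one_div]
        apply inv_anti₀ (Real.exp_pos _)
        have : Real.exp (1 / T * s) ≤ Real.exp 1 := by
          apply Real.exp_le_exp.2
          rw [one_div_mul_eq_div, div_le_one hT]; exact hs.2.trans htT
        have := Real.exp_one_lt_d9
        linarith
      exact mul_le_mul b a (hupos t ht).le (Real.exp_pos _).le
    · filter_upwards [ae_restrict_mem measurableSet_Ioi] with s hs
      exact mul_nonneg (Real.exp_pos _).le (hupos s hs).le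
  simp only [setIntegral_const, smul_eq_mul, Measure.real, Real.volume_Ioc, sub_zero,
    ENNReal.toReal_ofReal ht.le] at h1
  rw [le_div_iff₀ ht]
  have : 3 / φ (1 / T) = 3 * (1 / φ (1 / T)) := by ring
  linarith

lemma sbm_u_lower (φ u : ℝ → ℝ)
    (hupos : ∀ t, 0 < t → 0 < u t)
    (hudec : ∀ s t, 0 < s → s ≤ t → u t ≤ u s)
    (huI : ∀ l, 0 < l → IntegrableOn (fun t => Real.exp (-(l * t)) * u t) (Ioi 0))
    (hu : ∀ l, 0 < l → ∫ t in Ioi (0:ℝ), Real.exp (-(l * t)) * u t = 1 / φ l)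
    (t l : ℝ) (ht : 0 < t) (hl : 0 < l) :
    1 / φ l ≤ Real.exp 1 * (1 / φ (1 / t)) + u t * (1 / l) := by
  have hT : 0 < 1 / t := by positivity
  have hE : IntegrableOn (fun s => Real.exp (-(l * s))) (Ioi 0) := by
    simpa [neg_mul] using integrableOn_exp_mul_Ioi (a := -l) (by linarith) 0
  have hEv : ∫ s in Ioi (0:ℝ), Real.exp (-(l * s)) = 1 / l := by
    have := integral_exp_mul_Ioi (a := -l) (by linarith) 0
    simpa [neg_mul] using this
  rw [← hu _ hl, ← hu _ hT, ← hEv, ← integral_const_mul, ← integral_const_mul,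
    ← integral_add ((huI _ hT).const_mul _) (hE.const_mul _)]
  refine setIntegral_mono_on (huI _ hl) (((huI _ hT).const_mul _).add (hE.const_mul _))
    measurableSet_Ioi ?_
  intro s (hs : 0 < s)
  have us := hupos s hs
  have ut := hupos t ht
  have e1 := Real.exp_pos (-(l * s))
  have e2 : Real.exp (-(l * s)) ≤ 1 := Real.exp_le_one_iff.2 (by have := mul_pos hl hs; linarith)
  rw [← mul_assoc, ← Real.exp_add]
  rcases le_total s t with h | h
  · have : 1 ≤ Real.exp (1 + -(1 / t * s)) := by
      apply Real.one_le_exp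
      rw [one_div_mul_eq_div]
      have : s / t ≤ 1 := (div_le_one ht).2 h
      linarith
    nlinarith
  · have := hudec t s ht h
    have := Real.exp_pos (1 + -(1 / t * s))
    nlinarith

lemma sbm_g_bounds (d : ℕ) (hd : 3 ≤ d) (u : ℝ → ℝ)
    (hupos : ∀ t, 0 < t → 0 < u t)
    (hudec : ∀ s t, 0 < s → s ≤ t → u t ≤ u s)
    (A R : ℝ) (hR : 0 < R) (hA : ∀ t, 0 < t → t ≤ R → u t ≤ A / t)
    (h : ℝ → ℝ) (hh : h = fun t => (4 * Real.pi * t) ^ (-(d:ℝ) / 2) *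
      Real.exp (-(R / (4 * t))) * u t) :
    (∫ t in Ioi (0:ℝ), h t) ≤ (4 ^ (d + 1) * (d + 1).factorial + 2) * (A * R ^ (-(d:ℝ) / 2)) ∧
    ((4 * Real.pi) ^ (-(d:ℝ) / 2) * Real.exp (-1) / 2) * (R ^ (-(d:ℝ) / 2) * (R * u R))
      ≤ ∫ t in Ioi (0:ℝ), h t := by
  have hd3 : (3:ℝ) ≤ d := by exact_mod_cast hd
  have hApos : 0 < A := by
    have := (hupos R hR).trans_le (hA R hR le_rfl)
    exact (div_pos_iff_of_pos_right hR).1 this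
  have hpi := Real.pi_gt_three
  have hm : AEMeasurable u (volume.restrict (Ioi (0:ℝ))) :=
    aemeasurable_restrict_of_antitoneOn measurableSet_Ioi
      (fun s hs t _ hst => hudec s t hs hst)
  have hhm : AEStronglyMeasurable h (volume.restrict (Ioi (0:ℝ))) := by
    rw [hh]
    refine (AEMeasurable.mul (Measurable.aemeasurable ?_) hm).aestronglyMeasurable
    fun_prop
  have hpos : ∀ t, 0 < t → 0 < h t := by
    intro t ht
    have := hupos t ht
    rw [hh]; positivity
  set K : ℝ := 4 ^ (d + 1) * (d + 1).factorial with hK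
  have hKpos : 0 < K := by positivity
  have h4 : ∀ t, 0 < t → (4 * Real.pi * t) ^ (-(d:ℝ) / 2) ≤ t ^ (-(d:ℝ) / 2) := by
    intro t ht
    apply Real.rpow_le_rpow_of_nonpos ht
    · nlinarith
    · linarith
  have b1 : ∀ t ∈ Ioc 0 R, h t ≤ K * (A * R ^ (-(d:ℝ) / 2)) / R := by
    intro t ⟨ht, htR⟩
    have hx : 1 ≤ R / t := (one_le_div ht).2 htR
    have e1 : t ^ (-(d:ℝ) / 2) = R ^ (-(d:ℝ) / 2) * (R / t) ^ ((d:ℝ) / 2) := by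
      rw [Real.div_rpow hR.le ht.le, neg_div, Real.rpow_neg hR.le, Real.rpow_neg ht.le]
      have := Real.rpow_pos_of_pos hR ((d:ℝ) / 2)
      have := Real.rpow_pos_of_pos ht ((d:ℝ) / 2)
      field_simp
    have e2 : (R / t) ^ ((d:ℝ) / 2) ≤ (R / t) ^ d := by
      rw [← Real.rpow_natCast]
      exact Real.rpow_le_rpow_of_exponent_le hx (by linarith)
    have e3 : (R / t) ^ (d + 1) * Real.exp (-(R / (4 * t))) ≤ K := by
      have := Real.pow_div_factorial_le_exp (R / (4 * t)) (by positivity) (d + 1)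
      rw [Real.exp_neg, ← div_eq_mul_inv, div_le_iff₀ (Real.exp_pos _)]
      rw [div_le_iff₀ (by positivity)] at this
      calc (R / t) ^ (d + 1) = 4 ^ (d + 1) * (R / (4 * t)) ^ (d + 1) := by
            rw [← mul_pow]; congr 1; field_simp
        _ ≤ 4 ^ (d + 1) * (Real.exp (R / (4 * t)) * (d + 1).factorial) := by gcongr
        _ = _ := by rw [hK]; ring
    have hu1 := hA t ht htR
    have hu0 := hupos t ht
    rw [hh]
    calc (4 * Real.pi * t) ^ (-(d:ℝ) / 2) * Real.exp (-(R / (4 * t))) * u t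
        ≤ (R ^ (-(d:ℝ) / 2) * (R / t) ^ d) * Real.exp (-(R / (4 * t))) * (A / t) := by
          have := (h4 t ht).trans_eq e1
          gcongr
          exact this.trans (by gcongr)
      _ = ((R / t) ^ (d + 1) * Real.exp (-(R / (4 * t)))) * (A * R ^ (-(d:ℝ) / 2)) / R := by
          rw [pow_succ]; field_simp
      _ ≤ _ := by gcongr
  have b2 : ∀ t ∈ Ioi R, h t ≤ A / R * t ^ (-(d:ℝ) / 2) := by
    intro t (ht : R < t)
    have ht0 : 0 < t := hR.trans ht
    have hu1 := (hudec R t hR ht.le).trans (hA R hR le_rfl)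
    have hu0 := hupos t ht0
    have e2 : Real.exp (-(R / (4 * t))) ≤ 1 := by
      apply Real.exp_le_one_iff.2
      have : 0 < R / (4 * t) := by positivity
      linarith
    rw [hh]
    calc (4 * Real.pi * t) ^ (-(d:ℝ) / 2) * Real.exp (-(R / (4 * t))) * u t
        ≤ t ^ (-(d:ℝ) / 2) * 1 * (A / R) := by
          have := h4 t ht0
          gcongr
      _ = _ := by ring
  have J2 : IntegrableOn (fun t : ℝ => A / R * t ^ (-(d:ℝ) / 2)) (Ioi R) :=
    (integrableOn_Ioi_rpow_of_lt (by linarith) hR).const_mul _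
  have J1 : IntegrableOn (fun t : ℝ => K * (A * R ^ (-(d:ℝ) / 2)) / R) (Ioc 0 R) :=
    integrableOn_const (by simp) (by finiteness)
  have H1 : IntegrableOn h (Ioc 0 R) := by
    refine Integrable.mono' J1 (hhm.mono_set Ioc_subset_Ioi_self) ?_
    filter_upwards [ae_restrict_mem measurableSet_Ioc] with t ht
    rw [Real.norm_eq_abs, abs_of_pos (hpos t ht.1)]
    exact b1 t ht
  have H2 : IntegrableOn h (Ioi R) := by
    refine Integrable.mono' J2 (hhm.mono_set (Ioi_subset_Ioi hR.le)) ?_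
    filter_upwards [ae_restrict_mem measurableSet_Ioi] with t ht
    rw [Real.norm_eq_abs, abs_of_pos (hpos t (hR.trans ht))]
    exact b2 t ht
  have hU : Ioc 0 R ∪ Ioi R = Ioi 0 := Ioc_union_Ioi_eq_Ioi hR.le
  have H : IntegrableOn h (Ioi 0) := hU ▸ H1.union H2
  constructor
  · rw [← hU, setIntegral_union (Ioc_disjoint_Ioi le_rfl) measurableSet_Ioi H1 H2]
    have k1 := setIntegral_mono_on H1 J1 measurableSet_Ioc b1
    have k2 := setIntegral_mono_on H2 J2 measurableSet_Ioi b2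
    rw [integral_const_mul, integral_Ioi_rpow_of_lt (by linarith) hR] at k2
    simp only [setIntegral_const, smul_eq_mul, Measure.real, Real.volume_Ioc, sub_zero,
      ENNReal.toReal_ofReal hR.le] at k1
    rw [mul_div_cancel₀ _ hR.ne'] at k1
    have k3 : A / R * (-R ^ (-(d:ℝ) / 2 + 1) / (-(d:ℝ) / 2 + 1)) ≤ 2 * (A * R ^ (-(d:ℝ) / 2)) := by
      rw [Real.rpow_add hR, Real.rpow_one]
      have q := Real.rpow_pos_of_pos hR (-(d:ℝ) / 2)
      have : A / R * (-(R ^ (-(d:ℝ) / 2) * R) / (-(d:ℝ) / 2 + 1)) =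
          (A * R ^ (-(d:ℝ) / 2)) / ((d:ℝ) / 2 - 1) := by
        have : (d:ℝ) / 2 - 1 ≠ 0 := by linarith
        rw [show -(d:ℝ) / 2 + 1 = -((d:ℝ) / 2 - 1) by ring, neg_div_neg_eq]
        field_simp
      rw [this, div_le_iff₀ (by linarith)]
      have : 0 < A * R ^ (-(d:ℝ) / 2) := by positivity
      nlinarith
    linarith
  · have hs : Ioc (R / 2) R ⊆ Ioi 0 := fun t ht => lt_trans (by positivity) ht.1
    have k1 : ∫ t in Ioc (R / 2) R, (4 * Real.pi * R) ^ (-(d:ℝ) / 2) * Real.exp (-1) * u R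
        ≤ ∫ t in Ioi (0:ℝ), h t := by
      refine (setIntegral_mono_on (integrableOn_const (by simp) (by finiteness))
        (H.mono_set hs) measurableSet_Ioc ?_).trans
        (setIntegral_mono_set H ?_ hs.eventuallyLE)
      · intro t ht
        have ht0 : 0 < t := hs ht
        have e1 : (4 * Real.pi * R) ^ (-(d:ℝ) / 2) ≤ (4 * Real.pi * t) ^ (-(d:ℝ) / 2) := by
          apply Real.rpow_le_rpow_of_nonpos (by positivity)
          · have := ht.2
            gcongr
          · linarith
        have e2 : Real.exp (-1) ≤ Real.exp (-(R / (4 * t))) := by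
          apply Real.exp_le_exp.2
          have : R / (4 * t) ≤ 1 := by
            rw [div_le_one (by positivity)]
            have := ht.1
            linarith
          linarith
        have e3 := hudec t R ht0 ht.2
        have e4 := hupos R hR
        rw [hh]
        dsimp only
        gcongr
      · filter_upwards [ae_restrict_mem measurableSet_Ioi] with s hs
        exact (hpos s hs).le
    simp only [setIntegral_const, smul_eq_mul, Measure.real, Real.volume_Ioc] at k1
    rw [ENNReal.toReal_ofReal (by linarith), Real.mul_rpow (by positivity) hR.le] at k1
    refine le_trans (le_of_eq ?_) k1
    ring

/-- Under (A-1) with `α = 2` and (A-3), the Green function profile of the subordinate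
Brownian motion satisfies `g(r) ≍ r^{-d+2}/φ'(r⁻²)` and `g(r) ≍ r^{-d}/φ(r⁻²)` as `r → 0+`. -/
theorem sbm_green_asymp_alpha_two
    (d : ℕ) (hd : 3 ≤ d)
    (μ φ φ' : ℝ → ℝ)
    (hμpos : ∀ t, 0 < t → 0 < μ t)
    (hμdec : ∀ s t, 0 < s → s ≤ t → μ t ≤ μ s)
    (hμint : IntegrableOn (fun t => min 1 t * μ t) (Ioi 0))
    (hφ : ∀ l, 0 < l → φ l = ∫ t in Ioi (0:ℝ), (1 - Real.exp (-(l * t))) * μ t)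
    (hφ' : ∀ l, 0 < l → φ' l = ∫ t in Ioi (0:ℝ), t * Real.exp (-(l * t)) * μ t)
    (hA1 : ∀ x, 0 < x →
      Tendsto (fun l => φ' (l * x) / φ' l) atTop (𝓝 (1 : ℝ)))
    (u : ℝ → ℝ)
    (hupos : ∀ t, 0 < t → 0 < u t)
    (hudec : ∀ s t, 0 < s → s ≤ t → u t ≤ u s)
    (hu : ∀ l, 0 < l → ∫ t in Ioi (0:ℝ), Real.exp (-(l * t)) * u t = 1 / φ l)
    (g : ℝ → ℝ)
    (hg : ∀ r, 0 < r → g r =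
      ∫ t in Ioi (0:ℝ), (4 * Real.pi * t) ^ (-(d:ℝ) / 2) * Real.exp (-(r ^ 2 / (4 * t))) * u t) :
    (∃ c C r₀ : ℝ, 0 < c ∧ c ≤ C ∧ 0 < r₀ ∧ ∀ r, 0 < r → r < r₀ →
      c * (r ^ (-(d:ℝ) + 2) / φ' (r ^ (-2 : ℝ))) ≤ g r ∧
      g r ≤ C * (r ^ (-(d:ℝ) + 2) / φ' (r ^ (-2 : ℝ)))) ∧
    (∃ c C r₀ : ℝ, 0 < c ∧ c ≤ C ∧ 0 < r₀ ∧ ∀ r, 0 < r → r < r₀ →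
      c * (r ^ (-(d:ℝ)) / φ (r ^ (-2 : ℝ))) ≤ g r ∧
      g r ≤ C * (r ^ (-(d:ℝ)) / φ (r ^ (-2 : ℝ)))) := by
  obtain ⟨p1, p2, p3, p4, p5, p6⟩ := sbm_phi_facts μ φ φ' hμpos hμdec hμint hφ hφ'
  have huI : ∀ l, 0 < l → IntegrableOn (fun t => Real.exp (-(l * t)) * u t) (Ioi 0) := by
    intro l hl
    by_contra hn
    have h1 := hu l hl
    rw [integral_undef hn] at h1
    have := p1 l hl
    have : 0 < 1 / φ l := by positivity
    linarith
  obtain ⟨C, L, hC, hL, hCL⟩ := sbm_karamata φ φ' p2 p3 p4 p6 hA1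
  obtain ⟨K, M, hK, hM, hKM⟩ := sbm_ratio φ φ' p2 p5 hA1 C L hC hL hCL
  -- main bounds
  set B : ℝ := 3 * (4 ^ (d + 1) * (d + 1).factorial + 2) with hB
  have hBpos : 0 < B := by positivity
  have hexp : Real.exp 1 < 2.75 := by have := Real.exp_one_lt_d9; linarith
  set b : ℝ := ((4 * Real.pi) ^ (-(d:ℝ) / 2) * Real.exp (-1) / 2) * (1 / (4 * K)) with hb
  have hbpos : 0 < b := by positivity
  have main : ∀ r, 0 < r → max L (K * M) ≤ r ^ (-2 : ℝ) →
      b * (r ^ (-(d:ℝ)) / φ (r ^ (-2 : ℝ))) ≤ g r ∧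
      g r ≤ B * (r ^ (-(d:ℝ)) / φ (r ^ (-2 : ℝ))) := by
    intro r hr hrM
    have hR : 0 < r ^ 2 := by positivity
    have hr2 : r ^ (-2 : ℝ) = 1 / r ^ 2 := by
      rw [Real.rpow_neg hr.le, one_div]; norm_cast
    have hrd : (r ^ 2) ^ (-(d:ℝ) / 2) = r ^ (-(d:ℝ)) := by
      rw [← Real.rpow_natCast, ← Real.rpow_mul hr.le]; congr 1; push_cast; ring
    rw [hr2] at hrM ⊢
    obtain ⟨g1, g2⟩ := sbm_g_bounds d hd u hupos hudec (3 / φ (1 / r ^ 2)) (r ^ 2) hR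
      (fun t ht htR => sbm_u_upper φ u hupos hudec huI hu t _ ht htR) _ rfl
    rw [← hg r hr, hrd] at g1 g2
    have hrdp := Real.rpow_pos_of_pos hr (-(d:ℝ))
    have hφR := p1 (1 / r ^ 2) (by positivity)
    constructor
    · refine le_trans ?_ g2
      have hl : 0 < 1 / r ^ 2 / K := by positivity
      have ul := sbm_u_lower φ u hupos hudec huI hu (r ^ 2) _ hR hl
      have hM' : M ≤ 1 / r ^ 2 / K := by
        rw [le_div_iff₀ hK, mul_comm]; exact (le_max_right _ _).trans hrM
      have k := hKM _ hM'
      rw [mul_div_cancel₀ _ hK.ne'] at k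
      have hφl := p1 _ hl
      have k2 : 3 * (1 / φ (1 / r ^ 2)) ≤ 1 / φ (1 / r ^ 2 / K) := by
        rw [mul_one_div, div_le_div_iff₀ hφR hφl]; linarith
      have hq : 0 < 1 / φ (1 / r ^ 2) := by positivity
      have k3 : 1 / 4 * (1 / φ (1 / r ^ 2)) ≤ K * (r ^ 2 * u (r ^ 2)) := by
        have : u (r ^ 2) * (1 / (1 / r ^ 2 / K)) = K * (r ^ 2 * u (r ^ 2)) := by
          field_simp
        rw [this] at ul
        nlinarith
      have k4 : 1 / (4 * K) * (1 / φ (1 / r ^ 2)) ≤ r ^ 2 * u (r ^ 2) := by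
        rw [← mul_le_mul_iff_right₀ hK]
        refine le_trans (le_of_eq ?_) k3
        field_simp
      calc b * (r ^ (-(d:ℝ)) / φ (1 / r ^ 2))
          = ((4 * Real.pi) ^ (-(d:ℝ) / 2) * Real.exp (-1) / 2) *
            (r ^ (-(d:ℝ)) * (1 / (4 * K) * (1 / φ (1 / r ^ 2)))) := by rw [hb]; ring
        _ ≤ _ := by gcongr
    · refine g1.trans (le_of_eq ?_)
      rw [hB]; ring
  set N := max L (K * M) with hN
  have hNpos : 0 < N := hL.trans_le (le_max_left _ _)
  have hr0 : ∀ r : ℝ, 0 < r → r < N ^ (-(1/2) : ℝ) → N ≤ r ^ (-2 : ℝ) := by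
    intro r hr hrN
    have := Real.rpow_le_rpow_of_nonpos hr hrN.le (show (-2:ℝ) ≤ 0 by norm_num)
    rw [← Real.rpow_mul hNpos.le] at this
    norm_num at this
    simpa using this
  have hN0 : 0 < N ^ (-(1/2) : ℝ) := Real.rpow_pos_of_pos hNpos _
  refine ⟨⟨min (b / C) B, B, N ^ (-(1/2) : ℝ), by positivity, min_le_right _ _, hN0, ?_⟩,
    ⟨min b B, B, N ^ (-(1/2) : ℝ), by positivity, min_le_right _ _, hN0, ?_⟩⟩
  · intro r hr hrN
    have hNr := hr0 r hr hrN
    obtain ⟨m1, m2⟩ := main r hr hNr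
    have hlp : 0 < r ^ (-2 : ℝ) := Real.rpow_pos_of_pos hr _
    have q1 := p1 _ hlp
    have q2 := p2 _ hlp
    have q5 := p5 _ hlp
    have qC := hCL _ ((le_max_left _ _).trans hNr)
    have hrdp := Real.rpow_pos_of_pos hr (-(d:ℝ))
    have e : r ^ (-(d:ℝ) + 2) / φ' (r ^ (-2 : ℝ)) =
        r ^ (-(d:ℝ)) / (r ^ (-2 : ℝ) * φ' (r ^ (-2 : ℝ))) := by
      rw [Real.rpow_add hr, Real.rpow_neg hr.le 2]
      have : 0 < r ^ (2:ℝ) := Real.rpow_pos_of_pos hr _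
      field_simp
    rw [e]
    constructor
    · refine le_trans ?_ m1
      calc min (b / C) B * (r ^ (-(d:ℝ)) / (r ^ (-2 : ℝ) * φ' (r ^ (-2 : ℝ))))
          ≤ b / C * (r ^ (-(d:ℝ)) / (r ^ (-2 : ℝ) * φ' (r ^ (-2 : ℝ)))) := by
            gcongr; exact min_le_left _ _
        _ = b * (r ^ (-(d:ℝ)) / (C * (r ^ (-2 : ℝ) * φ' (r ^ (-2 : ℝ))))) := by
            field_simp
        _ ≤ _ := by gcongr
    · refine m2.trans ?_
      gcongr
  · intro r hr hrN
    obtain ⟨m1, m2⟩ := main r hr (hr0 r hr hrN)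
    have q1 := p1 _ (Real.rpow_pos_of_pos hr (-2))
    have hrdp := Real.rpow_pos_of_pos hr (-(d:ℝ))
    refine ⟨le_trans ?_ m1, m2⟩
    gcongr
    exact min_le_left _ _
end

section
/- Let w : (0,∞) → (0,∞) be decreasing and suppose there are constants 0 < c₁ ≤ c₂, b ≥ 0, s₀ > 0 and a function ℓ : (0,∞) → (0,∞) slowly varying at 0 (i.e. ℓ(tx)/ℓ(t) → 1 as t → 0+ for every x > 0) such that c₁ t^{−b} ℓ(t) ≤ w(t) ≤ c₂ t^{−b} ℓ(t) for all t ∈ (0, s₀). Let p > 1 and define I(r) = ∫_0^∞ t^{−p} e^{−ar/t} w(t) dt for r > 0 and a > 0. Then there exist constants 0 < c ≤ C (depending only on w, p, b, c₁, c₂) such that for every a > 0 there is r₀ = r₀(a) > 0 with c · a^{−p−b+1} r^{−p+1} w(r) ≤ I(r) ≤ C · a^{−p−b+1} r^{−p+1} w(r) for all r ∈ (0, r₀). -/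
open MeasureTheory Set Filter Topology

lemma aux_scale
    (w ℓ : ℝ → ℝ)
    (hℓpos : ∀ t, 0 < t → 0 < ℓ t)
    (hℓslow : ∀ x, 0 < x → Tendsto (fun t => ℓ (t * x) / ℓ t) (𝓝[>] (0:ℝ)) (𝓝 1))
    (b : ℝ)
    (c₁ c₂ s₀ : ℝ) (hc₁ : 0 < c₁) (hc₁₂ : c₁ ≤ c₂) (hs₀ : 0 < s₀)
    (hcomp : ∀ t, 0 < t → t < s₀ →
      c₁ * (t ^ (-b) * ℓ t) ≤ w t ∧ w t ≤ c₂ * (t ^ (-b) * ℓ t))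
    (x : ℝ) (hx : 0 < x) :
    ∃ δ : ℝ, 0 < δ ∧ ∀ t, 0 < t → t < δ →
      w (t * x) ≤ 2 * c₂ / c₁ * (x ^ (-b) * w t) ∧
      c₁ / (2 * c₂) * (x ^ (-b) * w t) ≤ w (t * x) := by
  have hc₂ : 0 < c₂ := hc₁.trans_le hc₁₂
  have h := (hℓslow x hx).eventually (Ioo_mem_nhds (show (1/2:ℝ) < 1 by norm_num)
    (show (1:ℝ) < 2 by norm_num))
  rw [eventually_nhdsWithin_iff, Metric.eventually_nhds_iff] at h
  obtain ⟨ε, hε, h⟩ := h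
  refine ⟨min ε (min s₀ (s₀ / x)), by positivity, fun t ht htδ => ?_⟩
  obtain ⟨h1, h23⟩ := lt_min_iff.1 htδ
  obtain ⟨h2, h3⟩ := lt_min_iff.1 h23
  rw [lt_div_iff₀ hx] at h3
  have hh := h (y := t) (by rw [Real.dist_eq, sub_zero, abs_of_pos ht]; exact h1) ht
  have hl := hℓpos t ht
  obtain ⟨ha, hb'⟩ := hh
  rw [lt_div_iff₀ hl] at ha
  rw [div_lt_iff₀ hl] at hb'
  obtain ⟨u1, u2⟩ := hcomp t ht h2
  obtain ⟨v1, v2⟩ := hcomp (t * x) (by positivity) h3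
  rw [Real.mul_rpow ht.le hx.le] at v1 v2
  have hX : 0 < x ^ (-b) := by positivity
  have hT : 0 < t ^ (-b) := by positivity
  constructor
  · calc w (t * x) ≤ c₂ * (t ^ (-b) * x ^ (-b) * ℓ (t * x)) := v2
      _ ≤ c₂ * (t ^ (-b) * x ^ (-b) * (2 * ℓ t)) := by gcongr
      _ = 2 * c₂ / c₁ * (x ^ (-b) * (c₁ * (t ^ (-b) * ℓ t))) := by field_simp
      _ ≤ _ := by gcongr
  · calc c₁ / (2 * c₂) * (x ^ (-b) * w t)
          ≤ c₁ / (2 * c₂) * (x ^ (-b) * (c₂ * (t ^ (-b) * ℓ t))) := by gcongr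
      _ = c₁ * (t ^ (-b) * x ^ (-b) * (1/2 * ℓ t)) := by field_simp
      _ ≤ c₁ * (t ^ (-b) * x ^ (-b) * ℓ (t * x)) := by gcongr
      _ ≤ _ := v1

lemma aux_iter (w : ℝ → ℝ) (D δ : ℝ) (hD : 0 < D)
    (hdoub : ∀ t, 0 < t → t < δ → w (t * (1/2)) ≤ D * w t)
    (R : ℝ) (hR : 0 < R) (hRδ : R < δ) (n : ℕ) :
    w (R * (1/2)^n) ≤ D ^ n * w R := by
  induction n with
  | zero => simp
  | succ n ih =>
    have hle : R * (1/2:ℝ)^n ≤ R :=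
      mul_le_of_le_one_right hR.le (pow_le_one₀ (by norm_num) (by norm_num))
    have := hdoub (R * (1/2)^n) (by positivity) (hle.trans_lt hRδ)
    calc w (R * (1/2)^(n+1)) = w (R * (1/2)^n * (1/2)) := by congr 1; ring
      _ ≤ D * w (R * (1/2)^n) := this
      _ ≤ D * (D ^ n * w R) := by gcongr
      _ = _ := by ring

lemma aux_potter (w : ℝ → ℝ) (D δ : ℝ) (hD : 0 < D)
    (hwpos : ∀ t, 0 < t → 0 < w t)
    (hwdec : ∀ s t, 0 < s → s ≤ t → w t ≤ w s)
    (hdoub : ∀ t, 0 < t → t < δ → w (t * (1/2)) ≤ D * w t)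
    (m : ℕ) (hm : D ≤ 2 ^ m)
    (R : ℝ) (hR : 0 < R) (hRδ : R < δ) (t : ℝ) (ht : 0 < t) (htR : t ≤ R) :
    w t ≤ D * (R / t) ^ m * w R := by
  obtain ⟨n, hn1, hn2⟩ := exists_nat_pow_near (x := R / t) (y := (2:ℝ))
    (by rw [le_div_iff₀ ht]; linarith) (by norm_num)
  have hwR := hwpos R hR
  have h1 : R * (1/2)^(n+1) ≤ t := by
    rw [div_lt_iff₀ ht] at hn2
    rw [one_div, inv_pow, ← div_eq_mul_inv, div_le_iff₀ (by positivity)]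
    linarith
  calc w t ≤ w (R * (1/2)^(n+1)) := hwdec _ _ (by positivity) h1
    _ ≤ D ^ (n+1) * w R := aux_iter w D δ hD hdoub R hR hRδ _
    _ = D * D ^ n * w R := by ring
    _ ≤ D * (2 ^ m) ^ n * w R := by gcongr
    _ = D * (2 ^ n) ^ m * w R := by rw [← pow_mul, ← pow_mul, mul_comm m n]
    _ ≤ _ := by gcongr

lemma aux_J (w : ℝ → ℝ) (D δ : ℝ) (hD : 0 < D)
    (hwpos : ∀ t, 0 < t → 0 < w t)
    (hwdec : ∀ s t, 0 < s → s ≤ t → w t ≤ w s)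
    (hdoub : ∀ t, 0 < t → t < δ → w (t * (1/2)) ≤ D * w t)
    (m : ℕ) (hm : D ≤ 2 ^ m) (p : ℝ) (hp : 1 < p) (N : ℕ) (hN : p + m ≤ N)
    (R : ℝ) (hR : 0 < R) (hRδ : R < δ) :
    Real.exp (-2) / 2 * (R ^ (-p + 1) * w R) ≤
      (∫ t in Ioi (0:ℝ), t ^ (-p) * Real.exp (-(R / t)) * w t) ∧
    (∫ t in Ioi (0:ℝ), t ^ (-p) * Real.exp (-(R / t)) * w t) ≤
      (D * N.factorial + 1 / (p - 1)) * (R ^ (-p + 1) * w R) := by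
  have hwR := hwpos R hR
  set f : ℝ → ℝ := fun t => t ^ (-p) * Real.exp (-(R / t)) * w t with hf
  set K : ℝ := D * N.factorial * (R ^ (-p) * w R) with hK
  have hRp : R * R ^ (-p) = R ^ (-p + 1) := by
    rw [Real.rpow_add hR, Real.rpow_one, mul_comm]
  have hf0 : ∀ t, 0 < t → 0 ≤ f t := fun t ht => by
    have := hwpos t ht
    simp only [hf]; positivity
  have hb1 : ∀ t ∈ Ioc 0 R, f t ≤ K := by
    rintro t ⟨ht, htR⟩
    have hu : 1 ≤ R / t := by rw [le_div_iff₀ ht]; linarith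
    have hu0 : 0 < R / t := by positivity
    have e1 : t ^ (-p) = R ^ (-p) * (R / t) ^ p := by
      rw [Real.div_rpow hR.le ht.le, Real.rpow_neg ht.le, Real.rpow_neg hR.le]
      have : 0 < R ^ p := by positivity
      field_simp
    have e2 : (R / t) ^ p * (R / t) ^ m ≤ N.factorial * Real.exp (R / t) := by
      calc (R / t) ^ p * (R / t) ^ m = (R / t) ^ (p + m) := by
            rw [Real.rpow_add hu0, Real.rpow_natCast]
        _ ≤ (R / t) ^ (N : ℝ) := Real.rpow_le_rpow_of_exponent_le hu hN
        _ = (R / t) ^ N := Real.rpow_natCast _ _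
        _ ≤ _ := by
          have := Real.pow_div_factorial_le_exp (R / t) hu0.le N
          rw [div_le_iff₀ (by positivity)] at this
          linarith
    have hpot := aux_potter w D δ hD hwpos hwdec hdoub m hm R hR hRδ t ht htR
    calc f t ≤ t ^ (-p) * Real.exp (-(R / t)) * (D * (R / t) ^ m * w R) := by
          simp only [hf]; gcongr
      _ = R ^ (-p) * D * w R * Real.exp (-(R / t)) * ((R / t) ^ p * (R / t) ^ m) := by
          rw [e1]; ring
      _ ≤ R ^ (-p) * D * w R * Real.exp (-(R / t)) * (N.factorial * Real.exp (R / t)) := by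
          gcongr
      _ = K * (Real.exp (-(R / t)) * Real.exp (R / t)) := by rw [hK]; ring
      _ = K := by rw [← Real.exp_add]; simp
  have hb2 : ∀ t ∈ Ioi R, f t ≤ t ^ (-p) * w R := by
    intro t ht
    have ht' : R < t := ht
    have ht0 : 0 < t := hR.trans ht'
    have h1 := hwdec R t hR ht'.le
    have h2 : Real.exp (-(R / t)) ≤ 1 := by
      rw [Real.exp_le_one_iff]
      have : 0 < R / t := by positivity
      linarith
    have h3 := hwpos t ht0
    calc f t ≤ t ^ (-p) * 1 * w R := by simp only [hf]; gcongr
      _ = _ := by ring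
  have hmeas : AEStronglyMeasurable f (volume.restrict (Ioi 0)) := by
    apply AEMeasurable.aestronglyMeasurable
    have hw : AEMeasurable w (volume.restrict (Ioi (0:ℝ))) :=
      aemeasurable_restrict_of_antitoneOn measurableSet_Ioi
        (fun s hs t _ hst => hwdec s t hs hst)
    have hm1 : Measurable (fun t : ℝ => t ^ (-p) * Real.exp (-(R / t))) := by fun_prop
    exact hm1.aemeasurable.mul hw
  have hi1 : IntegrableOn f (Ioc 0 R) := by
    refine Integrable.mono' (g := fun _ => K) (integrable_const K)
      (hmeas.mono_measure (Measure.restrict_mono (fun t ht => ht.1) le_rfl)) ?_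
    filter_upwards [ae_restrict_mem measurableSet_Ioc] with t ht
    rw [Real.norm_of_nonneg (hf0 t ht.1)]
    exact hb1 t ht
  have hig : IntegrableOn (fun t : ℝ => t ^ (-p) * w R) (Ioi R) :=
    (integrableOn_Ioi_rpow_of_lt (by linarith) hR).mul_const _
  have hi2 : IntegrableOn f (Ioi R) := by
    refine Integrable.mono' hig
      (hmeas.mono_measure (Measure.restrict_mono (fun t ht => hR.trans ht) le_rfl)) ?_
    filter_upwards [ae_restrict_mem measurableSet_Ioi] with t ht
    rw [Real.norm_of_nonneg (hf0 t (hR.trans ht))]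
    exact hb2 t ht
  have hun : Ioc 0 R ∪ Ioi R = Ioi 0 := Ioc_union_Ioi_eq_Ioi hR.le
  have hi : IntegrableOn f (Ioi 0) := by rw [← hun]; exact hi1.union hi2
  constructor
  · have hsub : Ioc (R/2) R ⊆ Ioi 0 := fun t ht => (half_pos hR).trans ht.1
    calc Real.exp (-2) / 2 * (R ^ (-p + 1) * w R)
        = ∫ t in Ioc (R/2) R, R ^ (-p) * Real.exp (-2) * w R := by
          rw [setIntegral_const, Real.volume_real_Ioc_of_le (by linarith), smul_eq_mul, ← hRp]
          ring
      _ ≤ ∫ t in Ioc (R/2) R, f t := by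
          refine setIntegral_mono_on (integrable_const _) (hi.mono_set hsub)
            measurableSet_Ioc ?_
          rintro t ⟨ht1, ht2⟩
          have ht : 0 < t := (half_pos hR).trans ht1
          have h1 := hwdec t R ht ht2
          have h2 : R ^ (-p) ≤ t ^ (-p) :=
            Real.rpow_le_rpow_of_nonpos ht ht2 (by linarith)
          have h3 : (-2:ℝ) ≤ -(R / t) := by
            have : R / t ≤ 2 := by rw [div_le_iff₀ ht]; linarith
            linarith
          simp only [hf]; gcongr
      _ ≤ ∫ t in Ioi 0, f t := by
          refine setIntegral_mono_set hi ?_ hsub.eventuallyLE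
          filter_upwards [ae_restrict_mem measurableSet_Ioi] with t ht
          exact hf0 t ht
  · have hdisj : Disjoint (Ioc 0 R) (Ioi R) := by
      rw [Set.disjoint_left]; intro t ht ht'; exact absurd ht.2 (not_le.2 ht')
    have s1 : ∫ t in Ioc 0 R, f t ≤ ∫ t in Ioc 0 R, K :=
      setIntegral_mono_on hi1 (by simp) measurableSet_Ioc hb1
    have s2 : ∫ t in Ioi R, f t ≤ ∫ t in Ioi R, t ^ (-p) * w R :=
      setIntegral_mono_on hi2 hig measurableSet_Ioi hb2
    rw [setIntegral_const, Real.volume_real_Ioc_of_le hR.le, smul_eq_mul] at s1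
    rw [integral_mul_const, integral_Ioi_rpow_of_lt (by linarith) hR] at s2
    rw [← hun, setIntegral_union hdisj measurableSet_Ioi hi1 hi2]
    have q1 : (R - 0) * K = D * N.factorial * (R ^ (-p + 1) * w R) := by
      rw [hK, ← hRp]; ring
    have q2 : -R ^ (-p + 1) / (-p + 1) * w R = 1 / (p - 1) * (R ^ (-p + 1) * w R) := by
      have h1 : p - 1 ≠ 0 := by linarith
      have h2 : -p + 1 = -(p - 1) := by ring
      rw [show -R ^ (-p + 1) / (-p + 1) = R ^ (-p + 1) / (p - 1) by
        rw [← neg_div_neg_eq, neg_neg]; congr 1; ring]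
      ring
    rw [q1] at s1
    rw [q2] at s2
    rw [add_mul]
    exact add_le_add s1 s2


/-- Asymptotic lemma: if `w` is decreasing and comparable to `t^{-b} ℓ(t)` near `0` with `ℓ`
slowly varying at `0`, then for `p > 1` the integral `I(r) = ∫₀^∞ t^{-p} e^{-ar/t} w(t) dt`
satisfies `I(r) ≍ a^{-p-b+1} r^{-p+1} w(r)` as `r → 0+`, with comparison constants independent
of `a`. -/
theorem asymptotic_lemma
    (w ℓ : ℝ → ℝ)
    (hwpos : ∀ t, 0 < t → 0 < w t)
    (hwdec : ∀ s t, 0 < s → s ≤ t → w t ≤ w s)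
    (hℓpos : ∀ t, 0 < t → 0 < ℓ t)
    (hℓslow : ∀ x, 0 < x → Tendsto (fun t => ℓ (t * x) / ℓ t) (𝓝[>] (0:ℝ)) (𝓝 1))
    (b : ℝ) (hb : 0 ≤ b)
    (c₁ c₂ s₀ : ℝ) (hc₁ : 0 < c₁) (hc₁₂ : c₁ ≤ c₂) (hs₀ : 0 < s₀)
    (hcomp : ∀ t, 0 < t → t < s₀ →
      c₁ * (t ^ (-b) * ℓ t) ≤ w t ∧ w t ≤ c₂ * (t ^ (-b) * ℓ t))
    (p : ℝ) (hp : 1 < p) :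
    ∃ c C : ℝ, 0 < c ∧ c ≤ C ∧ ∀ a : ℝ, 0 < a → ∃ r₀ : ℝ, 0 < r₀ ∧
      ∀ r, 0 < r → r < r₀ →
        c * (a ^ (-p - b + 1) * r ^ (-p + 1) * w r) ≤
          (∫ t in Ioi (0:ℝ), t ^ (-p) * Real.exp (-(a * r / t)) * w t) ∧
        (∫ t in Ioi (0:ℝ), t ^ (-p) * Real.exp (-(a * r / t)) * w t) ≤
          C * (a ^ (-p - b + 1) * r ^ (-p + 1) * w r) := by
  have hc₂ : 0 < c₂ := hc₁.trans_le hc₁₂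
  have hscale := aux_scale w ℓ hℓpos hℓslow b c₁ c₂ s₀ hc₁ hc₁₂ hs₀ hcomp
  obtain ⟨δ, hδ, hd⟩ := hscale (1/2) (by norm_num)
  set D : ℝ := 2 * c₂ / c₁ * (1/2) ^ (-b) with hDdef
  have hD : 0 < D := by positivity
  have hdoub : ∀ t, 0 < t → t < δ → w (t * (1/2)) ≤ D * w t := fun t ht htδ => by
    have := (hd t ht htδ).1
    rwa [← mul_assoc] at this
  obtain ⟨m, hm⟩ := pow_unbounded_of_one_lt D (show (1:ℝ) < 2 by norm_num)
  obtain ⟨N, hN⟩ := exists_nat_ge (p + m)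
  set A : ℝ := Real.exp (-2) / 2 with hA
  set B : ℝ := D * N.factorial + 1 / (p - 1) with hB
  have hA0 : 0 < A := by positivity
  have hp1 : 0 < p - 1 := by linarith
  have hB0 : 0 < B := by positivity
  refine ⟨A * (c₁ / (2 * c₂)), max (B * (2 * c₂ / c₁)) (A * (c₁ / (2 * c₂))), by positivity,
    le_max_right _ _, fun a ha => ?_⟩
  obtain ⟨η, hη, he⟩ := hscale a ha
  refine ⟨min η (δ / a), by positivity, fun r hr hrr => ?_⟩
  obtain ⟨h1, h2⟩ := lt_min_iff.1 hrr
  rw [lt_div_iff₀ ha] at h2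
  obtain ⟨g1, g2⟩ := he r hr h1
  obtain ⟨j1, j2⟩ := aux_J w D δ hD hwpos hwdec hdoub m hm.le p hp N hN (a * r)
    (by positivity) (by linarith)
  rw [mul_comm r a] at g1 g2
  have hw := hwpos r hr
  have e : a ^ (-p - b + 1) * r ^ (-p + 1) * w r =
      (a * r) ^ (-p + 1) * (a ^ (-b) * w r) := by
    rw [Real.mul_rpow ha.le hr.le, show -p - b + 1 = (-p + 1) + (-b) by ring,
      Real.rpow_add ha]
    ring
  rw [e]
  constructor
  · refine le_trans ?_ j1
    calc _ = A * ((a * r) ^ (-p + 1) * (c₁ / (2 * c₂) * (a ^ (-b) * w r))) := by ring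
      _ ≤ _ := by gcongr
  · refine j2.trans ?_
    calc B * ((a * r) ^ (-p + 1) * w (a * r))
        ≤ B * ((a * r) ^ (-p + 1) * (2 * c₂ / c₁ * (a ^ (-b) * w r))) := by gcongr
      _ = B * (2 * c₂ / c₁) * ((a * r) ^ (-p + 1) * (a ^ (-b) * w r)) := by ring
      _ ≤ _ := by gcongr; exact le_max_left _ _
end

section
/- Let d ≥ 3 be an integer, assume condition (A-1) holds with some index α ∈ [0,2] (with condition (A-4) in addition when α = 2) and condition (A-3) holds, and define G(x) = g(|x|) for x ∈ ℝ^d \ {0}, where g is the radial Green function profile. Then there is a constant c > 0 such that for every r ∈ (0,1) and all x, y ∈ ℝ^d with |x| ≥ r and |y| ≥ r: |G(x) − G(y)| ≤ c · g(r) · min(1, |x−y|/r). -/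
open MeasureTheory Set Filter Topology

namespace GreenAux

lemma integrableOn_of_pos {f : ℝ → ℝ} {s : Set ℝ} (h : 0 < ∫ t in s, f t) : IntegrableOn f s := by
  by_contra hc
  have : ∫ t in s, f t = 0 := integral_undef hc
  linarith

lemma setIntegral_pos {f : ℝ → ℝ} (hi : IntegrableOn f (Ioi 0)) (hp : ∀ t, 0 < t → 0 < f t) :
    0 < ∫ t in Ioi (0:ℝ), f t := by
  rw [setIntegral_pos_iff_support_of_nonneg_ae _ hi]
  · have : Function.support f ∩ Ioi 0 = Ioi 0 := by
      ext t
      simp only [mem_inter_iff, Function.mem_support, mem_Ioi, and_iff_right_iff_imp]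
      exact fun h => (hp t h).ne'
    rw [this]; simp
  · filter_upwards [ae_restrict_mem measurableSet_Ioi] with t ht
    exact (hp t ht).le

lemma integral_t_exp {l : ℝ} (hl : 0 < l) :
    ∫ t in Ioi (0:ℝ), t * Real.exp (-(l * t)) = 1 / l ^ 2 := by
  have h := Real.integral_rpow_mul_exp_neg_mul_Ioi (a := 2) (r := l) (by norm_num) hl
  have e : (2:ℝ) - 1 = 1 := by norm_num
  simp only [e, Real.rpow_one, Real.Gamma_two] at h
  rw [h]; simp

lemma integrable_t_exp {l : ℝ} (hl : 0 < l) :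
    IntegrableOn (fun t => t * Real.exp (-(l * t))) (Ioi (0:ℝ)) := by
  apply integrableOn_of_pos
  rw [integral_t_exp hl]; positivity

/-- measurability -/
lemma aesm {w : ℝ → ℝ} (hdec : ∀ s t, 0 < s → s ≤ t → w t ≤ w s) :
    AEStronglyMeasurable w (volume.restrict (Ioi (0:ℝ))) := by
  apply AEMeasurable.aestronglyMeasurable
  apply aemeasurable_restrict_of_antitoneOn measurableSet_Ioi
  intro a ha b hb hab
  exact hdec a b ha hab

lemma laplace_deriv {w : ℝ → ℝ} (hw : ∀ t, 0 < t → 0 < w t)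
    (hdec : ∀ s t, 0 < s → s ≤ t → w t ≤ w s) (c : ℝ)
    (h1 : ∀ l, 0 < l → IntegrableOn (fun t => t * Real.exp (-(l * t)) * w t) (Ioi 0))
    (l : ℝ) (hl : 0 < l)
    (h0 : IntegrableOn (fun t => (c - Real.exp (-(l * t))) * w t) (Ioi 0)) :
    HasDerivAt (fun l => ∫ t in Ioi (0:ℝ), (c - Real.exp (-(l * t))) * w t)
      (∫ t in Ioi (0:ℝ), t * Real.exp (-(l * t)) * w t) l := by
  have hm := aesm hdec
  refine (hasDerivAt_integral_of_dominated_loc_of_deriv_le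
    (F := fun l t => (c - Real.exp (-(l * t))) * w t)
    (F' := fun l t => t * Real.exp (-(l * t)) * w t)
    (bound := fun t => t * Real.exp (-((l/2) * t)) * w t) (s := Ioi (l/2))
    (Ioi_mem_nhds (by linarith)) ?_ h0 ?_ ?_ (h1 _ (by linarith)) ?_).2
  · refine Eventually.of_forall fun x => ?_
    exact (Measurable.aestronglyMeasurable (by fun_prop)).mul hm
  · exact (Measurable.aestronglyMeasurable (by fun_prop)).mul hm
  · filter_upwards [ae_restrict_mem measurableSet_Ioi] with t ht x hx
    have ht' : 0 < t := ht
    have := hw t ht'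
    rw [Real.norm_of_nonneg (by positivity)]
    have hx' : l / 2 < x := hx
    gcongr
  · filter_upwards with t x hx
    have : HasDerivAt (fun x : ℝ => -(x * t)) (-t) x := by
      simpa using! ((hasDerivAt_id x).mul_const t).neg
    have := ((this.exp).const_sub c).mul_const (w t)
    have e : t * Real.exp (-(x * t)) * w t = -(Real.exp (-(x * t)) * -t) * w t := by ring
    rw [e]
    exact this

/-- `t e^{-lt} w` integrable if `e^{-lt} w` is. -/
lemma t_exp_integrable {w : ℝ → ℝ} (hw : ∀ t, 0 < t → 0 < w t)
    (hdec : ∀ s t, 0 < s → s ≤ t → w t ≤ w s)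
    (h1 : ∀ l, 0 < l → IntegrableOn (fun t => Real.exp (-(l * t)) * w t) (Ioi 0))
    (l : ℝ) (hl : 0 < l) :
    IntegrableOn (fun t => t * Real.exp (-(l * t)) * w t) (Ioi 0) := by
  have hm := aesm hdec
  refine Integrable.mono' ((h1 (l/2) (by linarith)).const_mul (2/l))
    ((Measurable.aestronglyMeasurable (by fun_prop)).mul hm) ?_
  filter_upwards [ae_restrict_mem measurableSet_Ioi] with t ht
  have ht' : 0 < t := ht
  have := hw t ht'
  rw [Real.norm_of_nonneg (by positivity)]
  have e : Real.exp (-(l * t)) = Real.exp (-(l/2*t)) * Real.exp (-(l/2*t)) := by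
    rw [← Real.exp_add]; ring_nf
  have h2 : (l/2*t) * Real.exp (-(l/2*t)) ≤ 1 := by
    have h3 := Real.add_one_le_exp (l/2*t)
    rw [Real.exp_neg, ← div_eq_mul_inv, div_le_one (Real.exp_pos _)]
    linarith
  have h4 : t * Real.exp (-(l/2*t)) ≤ 2 / l := by
    rw [le_div_iff₀ hl]; linarith
  rw [e]
  calc _ = (t * Real.exp (-(l/2*t))) * (Real.exp (-(l/2*t)) * w t) := by ring
    _ ≤ _ := by gcongr

lemma mu_t_exp_integrable {w : ℝ → ℝ} (hw : ∀ t, 0 < t → 0 < w t)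
    (hdec : ∀ s t, 0 < s → s ≤ t → w t ≤ w s)
    (h1 : IntegrableOn (fun t => min 1 t * w t) (Ioi 0))
    (l : ℝ) (hl : 0 < l) :
    IntegrableOn (fun t => t * Real.exp (-(l * t)) * w t) (Ioi 0) := by
  have hm := aesm hdec
  refine Integrable.mono' (h1.const_mul (1 + 1/l))
    ((Measurable.aestronglyMeasurable (by fun_prop)).mul hm) ?_
  filter_upwards [ae_restrict_mem measurableSet_Ioi] with t ht
  have ht' : 0 < t := ht
  have := hw t ht'
  rw [Real.norm_of_nonneg (by positivity), ← mul_assoc]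
  refine mul_le_mul_of_nonneg_right ?_ this.le
  have hl1 : 0 < 1 / l := by positivity
  have h2 : Real.exp (-(l * t)) ≤ 1 := Real.exp_le_one_iff.2 (by nlinarith [mul_pos hl ht'])
  rcases le_total 1 t with h | h
  · rw [min_eq_left h]
    have h3 := Real.add_one_le_exp (l*t)
    have h2 : (l*t) * Real.exp (-(l*t)) ≤ 1 := by
      rw [Real.exp_neg, ← div_eq_mul_inv, div_le_one (Real.exp_pos _)]
      linarith
    have h4 : t * Real.exp (-(l*t)) ≤ 1 / l := by
      rw [le_div_iff₀ hl]; linarith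
    linarith
  · rw [min_eq_right h]
    nlinarith [mul_pos hl1 ht']

lemma mu_one_sub_integrable {w : ℝ → ℝ} (hw : ∀ t, 0 < t → 0 < w t)
    (hdec : ∀ s t, 0 < s → s ≤ t → w t ≤ w s)
    (h1 : IntegrableOn (fun t => min 1 t * w t) (Ioi 0))
    (l : ℝ) (hl : 0 < l) :
    IntegrableOn (fun t => (1 - Real.exp (-(l * t))) * w t) (Ioi 0) := by
  have hm := aesm hdec
  refine Integrable.mono' (h1.const_mul (1 + l))
    ((Measurable.aestronglyMeasurable (by fun_prop)).mul hm) ?_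
  filter_upwards [ae_restrict_mem measurableSet_Ioi] with t ht
  have ht' : 0 < t := ht
  have := hw t ht'
  have h2 : Real.exp (-(l * t)) ≤ 1 := Real.exp_le_one_iff.2 (by nlinarith [mul_pos hl ht'])
  have h3 := Real.add_one_le_exp (-(l*t))
  have h4 := Real.exp_pos (-(l*t))
  rw [Real.norm_of_nonneg (mul_nonneg (by linarith) this.le), ← mul_assoc]
  refine mul_le_mul_of_nonneg_right ?_ this.le
  rcases le_total 1 t with h | h
  · rw [min_eq_left h]
    linarith
  · rw [min_eq_right h]
    nlinarith

/-- Abstract doubling of `u` near zero. -/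
lemma u_doubling {u V : ℝ → ℝ} (hupos : ∀ t, 0 < t → 0 < u t)
    (hudec : ∀ s t, 0 < s → s ≤ t → u t ≤ u s)
    (hi : ∀ l, 0 < l → IntegrableOn (fun t => t * Real.exp (-(l * t)) * u t) (Ioi 0))
    (hV : ∀ l, 0 < l → V l = ∫ t in Ioi (0:ℝ), t * Real.exp (-(l * t)) * u t)
    (x L : ℝ) (hx : 1 ≤ x) (hL : 0 < L) (hsmall : ∀ l, L ≤ l → V (l * x) ≤ V l / 6) :
    ∃ C s₀, 0 < C ∧ 0 < s₀ ∧ ∀ s, 0 < s → s ≤ s₀ → u (s / 2) ≤ C * u s := by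
  have hx0 : 0 < x := by linarith
  have hup : ∀ l, 0 < l → u (1 / l) ≤ 12 * l ^ 2 * V l := by
    intro l hl
    have hsub : Ioc (1/(2*l)) (1/l) ⊆ Ioi (0:ℝ) := fun t ht => lt_trans (by positivity) ht.1
    have h1 : ∫ t in Ioc (1/(2*l)) (1/l), t * Real.exp (-(l * t)) * u t ≤ V l := by
      rw [hV l hl]
      refine setIntegral_mono_set (hi l hl) ?_ hsub.eventuallyLE
      filter_upwards [ae_restrict_mem measurableSet_Ioi] with t ht
      have ht' : 0 < t := ht
      have := hupos t ht'
      simp only [Pi.zero_apply]; positivity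
    have h2 : ∫ t in Ioc (1/(2*l)) (1/l), (1/(2*l)) * Real.exp (-1) * u (1/l) ≤
        ∫ t in Ioc (1/(2*l)) (1/l), t * Real.exp (-(l * t)) * u t := by
      refine setIntegral_mono_on (integrableOn_const (by simp)) ((hi l hl).mono_set hsub) measurableSet_Ioc ?_
      intro t ht
      have ht0 : 0 < t := hsub ht
      have h3 := hudec t (1/l) ht0 ht.2
      have h4 := hupos (1/l) (by positivity)
      have h5 : l * t ≤ 1 := by have := (le_div_iff₀ hl).1 ht.2; linarith
      have h6 := ht.1.le
      gcongr
    rw [setIntegral_const] at h2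
    have h7 : (volume.real (Ioc (1/(2*l)) (1/l))) = 1/(2*l) := by
      rw [measureReal_def, Real.volume_Ioc, ENNReal.toReal_ofReal]
      · field_simp; norm_num
      · rw [sub_nonneg]; apply one_div_le_one_div_of_le hl; linarith
    rw [h7, smul_eq_mul] at h2
    have h8 : (1/3:ℝ) ≤ Real.exp (-1) := by
      have := Real.exp_one_lt_d9
      rw [Real.exp_neg, one_div]
      apply inv_anti₀ (Real.exp_pos _); linarith
    have h9 := hupos (1/l) (by positivity)
    have h10 : 1/(2*l) * (1/(2*l) * (1/3) * u (1/l)) ≤ V l := by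
      refine le_trans ?_ (h2.trans h1)
      gcongr
    have : 1/(2*l) * (1/(2*l) * (1/3) * u (1/l)) = u (1/l) / (12 * l^2) := by
      field_simp; norm_num
    rw [this, div_le_iff₀ (by positivity)] at h10
    linarith
  have hlow : ∀ l, L ≤ l → l ^ 2 * V l ≤ 2 * u (1 / (l * x)) := by
    intro l hl
    have hl0 : 0 < l := by linarith
    have hlx : 0 < l * x := by positivity
    have hU := hupos (1/(l*x)) (by positivity)
    have h1 : V l ≤ ∫ t in Ioi (0:ℝ), (Real.exp 1 * (t * Real.exp (-(l * x * t)) * u t) +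
        u (1/(l*x)) * (t * Real.exp (-(l*t)))) := by
      rw [hV l hl0]
      refine setIntegral_mono_on (hi l hl0) (Integrable.add ((hi _ hlx).const_mul _)
        ((integrable_t_exp hl0).const_mul _)) measurableSet_Ioi ?_
      intro t ht
      have ht0 : 0 < t := ht
      have hut := hupos t ht0
      rcases le_total t (1/(l*x)) with h | h
      · have h5 : l * x * t ≤ 1 := by have := (le_div_iff₀ hlx).1 h; linarith
        have h6 : Real.exp (-(l*t)) ≤ Real.exp 1 * Real.exp (-(l*x*t)) := by
          rw [← Real.exp_add]; apply Real.exp_le_exp.2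
          have : 0 < l * t := by positivity
          linarith
        have h7 : 0 ≤ u (1/(l*x)) * (t * Real.exp (-(l*t))) := by positivity
        have h8 : t * Real.exp (-(l * t)) * u t ≤ t * (Real.exp 1 * Real.exp (-(l*x*t))) * u t := by
          gcongr
        nlinarith
      · have h5 := hudec _ t (by positivity) h
        have h7 : 0 ≤ Real.exp 1 * (t * Real.exp (-(l * x * t)) * u t) := by positivity
        have h8 : t * Real.exp (-(l * t)) * u t ≤ t * Real.exp (-(l * t)) * u (1/(l*x)) := by
          gcongr
        linarith
    rw [integral_add ((hi _ hlx).const_mul _) ((integrable_t_exp hl0).const_mul _),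
      integral_const_mul, integral_const_mul, integral_t_exp hl0, ← hV _ hlx] at h1
    have h2 := hsmall l hl
    have h3 : 0 < V (l*x) := by
      rw [hV _ hlx]
      refine setIntegral_pos (hi _ hlx) fun t ht => ?_
      have := hupos t ht
      positivity
    have h4 : Real.exp 1 * V (l*x) ≤ 3 * V (l * x) := by
      have := Real.exp_one_lt_d9
      gcongr; linarith
    have h5 : V l / 2 ≤ u (1/(l*x)) * (1/l^2) := by linarith
    rw [mul_one_div, le_div_iff₀ (by positivity)] at h5
    linarith
  have hVmono : ∀ a b, 0 < a → a ≤ b → V b ≤ V a := by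
    intro a b ha hab
    rw [hV a ha, hV b (by linarith)]
    refine setIntegral_mono_on (hi _ (by linarith)) (hi _ ha) measurableSet_Ioi ?_
    intro t ht
    have ht0 : 0 < t := ht
    have hut := hupos t ht0
    gcongr
  refine ⟨96 * x ^ 2, 1 / (L * x), by positivity, by positivity, fun s hs hs0 => ?_⟩
  -- l = 1/(s x)
  have hl : L ≤ 1 / (s * x) := by
    rw [le_div_iff₀ (by positivity)] at hs0 ⊢
    linarith
  have h1 := hlow _ hl
  have h2 := hup (2/s) (by positivity)
  have h3 := hVmono (1/(s*x)) (2/s) (by positivity) (by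
    rw [div_le_div_iff₀ (by positivity) hs]; nlinarith)
  have e1 : 1 / (1/(s*x) * x) = s := by field_simp
  have e2 : 1 / (2/s) = s/2 := by field_simp
  rw [e1] at h1
  rw [e2] at h2
  have h4 : V (1/(s*x)) ≤ 2 * (s*x)^2 * u s := by
    have : (1 / (s*x))^2 * V (1/(s*x)) = V (1/(s*x)) / (s*x)^2 := by field_simp
    rw [this, div_le_iff₀ (by positivity)] at h1
    linarith
  calc u (s/2) ≤ 12 * (2/s)^2 * V (2/s) := h2
    _ ≤ 12 * (2/s)^2 * (2 * (s*x)^2 * u s) := by gcongr; linarith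
    _ = 96 * x^2 * u s := by field_simp; ring

/-- Smallness of `V(lx)/V(l)` for suitable `x`. -/
lemma V_small {α : ℝ} (hα2 : α ≤ 2) {φ φ' V : ℝ → ℝ}
    (hφpos : ∀ l, 0 < l → 0 < φ l)
    (hφ'pos : ∀ l, 0 < l → 0 < φ' l)
    (hder : ∀ l, 0 < l → HasDerivAt φ (φ' l) l)
    (hφ'dec : ∀ a b, 0 < a → a ≤ b → φ' b ≤ φ' a)
    (hφinf : Tendsto φ atTop atTop)
    (hA1 : ∀ x, 0 < x →
      Tendsto (fun l => φ' (l * x) / φ' l) atTop (𝓝 (x ^ (α / 2 - 1))))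
    (hV : ∀ l, 0 < l → V l = φ' l / φ l ^ 2) :
    ∃ x L, 1 ≤ x ∧ 0 < L ∧ ∀ l, L ≤ l → V (l * x) ≤ V l / 6 := by
  have hmono : ∀ a b, 0 < a → a ≤ b → φ a ≤ φ b := by
    have : MonotoneOn φ (Ioi 0) := by
      apply monotoneOn_of_deriv_nonneg (convex_Ioi 0)
      · exact fun x hx => (hder x hx).continuousAt.continuousWithinAt
      · rw [interior_Ioi]
        exact fun x hx => (hder x hx).differentiableAt.differentiableWithinAt
      · rw [interior_Ioi]
        intro x hx
        rw [(hder x hx).deriv]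
        exact (hφ'pos x hx).le
    exact fun a b ha hab => this ha (lt_of_lt_of_le ha hab) hab
  rcases lt_or_eq_of_le hα2 with h | h
  · have hp : 0 < 1 - α / 2 := by linarith
    have h1 := tendsto_rpow_neg_atTop hp
    have h2 := (h1.eventually (gt_mem_nhds (show (0:ℝ) < 1/6 by norm_num))).and
      (eventually_ge_atTop (1:ℝ))
    obtain ⟨x, hx, hx1⟩ := h2.exists
    have hx' : x ^ (α/2 - 1) < 1/6 := by rwa [neg_sub] at hx
    have h3 := ((hA1 x (by linarith)).eventually (gt_mem_nhds hx'))
    obtain ⟨L, hL⟩ := eventually_atTop.1 h3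
    refine ⟨x, max L 1, hx1, by positivity, fun l hl => ?_⟩
    have hl1 : 1 ≤ l := le_trans (le_max_right _ _) hl
    have hl0 : 0 < l := by linarith
    have hlx : 0 < l * x := by positivity
    have h4 := (hL l (le_trans (le_max_left _ _) hl)).le
    rw [div_le_iff₀ (hφ'pos l hl0)] at h4
    rw [hV l hl0, hV _ hlx]
    have h5 := hmono l (l*x) hl0 (by nlinarith)
    have h6 := hφpos l hl0
    have h7 := hφ'pos l hl0
    calc φ' (l*x) / φ (l*x)^2 ≤ (1/6 * φ' l) / φ l ^ 2 := by gcongr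
      _ = _ := by ring
  · have hc := hA1 2 (by norm_num)
    have e : α / 2 - 1 = 0 := by rw [h]; norm_num
    rw [e, Real.rpow_zero] at hc
    obtain ⟨L0, hL0⟩ := eventually_atTop.1
      (hc.eventually (lt_mem_nhds (show (0.9:ℝ) < 1 by norm_num)))
    set L1 := max L0 1 with hL1
    have hL1p : 0 < L1 := by positivity
    have hmon : MonotoneOn (fun l => φ (2 * l) - 1.8 * φ l) (Ici L1) := by
      have hd : ∀ l, 0 < l → HasDerivAt (fun l => φ (2 * l) - 1.8 * φ l)
          (φ' (2*l) * 2 - 1.8 * φ' l) l := by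
        intro l hl
        have h1 : HasDerivAt (fun l : ℝ => 2 * l) 2 l := by
          simpa using (hasDerivAt_id l).const_mul 2
        have h2 := (hder (2*l) (by linarith)).comp l h1
        exact h2.sub ((hder l hl).const_mul 1.8)
      apply monotoneOn_of_deriv_nonneg (convex_Ici L1)
      · exact fun x hx => (hd x (lt_of_lt_of_le hL1p hx)).continuousAt.continuousWithinAt
      · rw [interior_Ici]
        exact fun x hx => (hd x (lt_trans hL1p hx)).differentiableAt.differentiableWithinAt
      · rw [interior_Ici]
        intro x hx
        have hx0 : 0 < x := lt_trans hL1p hx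
        rw [(hd x hx0).deriv]
        have h4 := (hL0 x (le_trans (le_max_left _ _) (le_of_lt hx))).le
        rw [le_div_iff₀ (hφ'pos x hx0), mul_comm x 2] at h4
        linarith
    obtain ⟨L2, hL2⟩ := eventually_atTop.1 (hφinf.eventually_ge_atTop
      (-(φ (2 * L1) - 1.8 * φ L1) / 0.3))
    have hstep : ∀ l, max L1 L2 ≤ l → V (2 * l) ≤ V l * (4/9) := by
      intro l hl
      have hl1 : L1 ≤ l := le_trans (le_max_left _ _) hl
      have hl0 : 0 < l := lt_of_lt_of_le hL1p hl1
      have h1 := hmon (mem_Ici.2 le_rfl) (mem_Ici.2 hl1) hl1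
      have h2 := hL2 l (le_trans (le_max_right _ _) hl)
      rw [div_le_iff₀ (by norm_num)] at h2
      simp only at h1
      have h3 : 1.5 * φ l ≤ φ (2 * l) := by linarith
      rw [hV l hl0, hV _ (by linarith)]
      have h6 := hφpos l hl0
      have h7 := hφ'pos l hl0
      have h8 := hφ'dec l (2*l) hl0 (by linarith)
      calc φ' (2*l) / φ (2*l)^2 ≤ φ' l / (1.5 * φ l) ^ 2 := by gcongr
        _ = _ := by field_simp; norm_num
    refine ⟨8, max L1 L2, by norm_num, lt_of_lt_of_le hL1p (le_max_left _ _), fun l hl => ?_⟩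
    have hl0 : 0 < l := lt_of_lt_of_le hL1p (le_trans (le_max_left _ _) hl)
    have h1 := hstep l hl
    have h2 := hstep (2*l) (by linarith)
    have h3 := hstep (2*(2*l)) (by linarith)
    have e : l * 8 = 2 * (2 * (2 * l)) := by ring
    have hVp : 0 < V l := by
      rw [hV l hl0]; have := hφpos l hl0; have := hφ'pos l hl0; positivity
    rw [e]
    linarith

lemma phi_tendsto {φ u : ℝ → ℝ} (hφpos : ∀ l, 0 < l → 0 < φ l)
    (hupos : ∀ t, 0 < t → 0 < u t)
    (hudec : ∀ s t, 0 < s → s ≤ t → u t ≤ u s)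
    (hi : ∀ l, 0 < l → IntegrableOn (fun t => Real.exp (-(l * t)) * u t) (Ioi 0))
    (hu : ∀ l, 0 < l → ∫ t in Ioi (0:ℝ), Real.exp (-(l * t)) * u t = 1 / φ l) :
    Tendsto φ atTop atTop := by
  have h : Tendsto (fun l => ∫ t in Ioi (0:ℝ), Real.exp (-(l * t)) * u t) atTop
      (𝓝 (∫ t in Ioi (0:ℝ), (0:ℝ))) := by
    refine tendsto_integral_filter_of_dominated_convergence
      (fun t => Real.exp (-(1 * t)) * u t) ?_ ?_ (hi 1 one_pos) ?_
    · refine Eventually.of_forall fun l => ?_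
      exact (Measurable.aestronglyMeasurable (by fun_prop)).mul (aesm hudec)
    · filter_upwards [eventually_ge_atTop 1] with l hl
      filter_upwards [ae_restrict_mem measurableSet_Ioi] with t ht
      have ht0 : 0 < t := ht
      have := hupos t ht0
      rw [Real.norm_of_nonneg (by positivity)]
      gcongr
    · filter_upwards [ae_restrict_mem measurableSet_Ioi] with t ht
      have ht0 : 0 < t := ht
      have : Tendsto (fun l : ℝ => Real.exp (-(l * t))) atTop (𝓝 0) :=
        Real.tendsto_exp_neg_atTop_nhds_zero.comp (tendsto_id.atTop_mul_const ht0)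
      simpa using this.mul_const (u t)
  simp only [integral_zero] at h
  have h2 : Tendsto (fun l => (∫ t in Ioi (0:ℝ), Real.exp (-(l * t)) * u t)⁻¹) atTop atTop := by
    apply Tendsto.inv_tendsto_nhdsGT_zero
    rw [tendsto_nhdsWithin_iff]
    refine ⟨h, ?_⟩
    filter_upwards [eventually_gt_atTop 0] with l hl
    rw [hu l hl]; have := hφpos l hl; simp only [mem_Ioi]; positivity
  refine h2.congr' ?_
  filter_upwards [eventually_gt_atTop 0] with l hl
  rw [hu l hl]; simp

/-- The Green integral with parameter `q`. -/
lemma green_integrable {d : ℕ} (hd : 3 ≤ d) {u : ℝ → ℝ} (hupos : ∀ t, 0 < t → 0 < u t)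
    (hudec : ∀ s t, 0 < s → s ≤ t → u t ≤ u s)
    (hi : IntegrableOn (fun t => Real.exp (-(1 * t)) * u t) (Ioi 0)) (q : ℝ) (hq : 0 < q) :
    IntegrableOn (fun t => (4 * Real.pi * t) ^ (-(d:ℝ) / 2) * Real.exp (-(q / t)) * u t)
      (Ioi 0) := by
  have hd' : (3:ℝ) ≤ d := by exact_mod_cast hd
  have hm : AEStronglyMeasurable
      (fun t => (4 * Real.pi * t) ^ (-(d:ℝ) / 2) * Real.exp (-(q / t)) * u t)
      (volume.restrict (Ioi (0:ℝ))) :=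
    (Measurable.aestronglyMeasurable (by fun_prop)).mul (aesm hudec)
  have hK : ∀ t, 0 < t → (4 * Real.pi * t) ^ (-(d:ℝ) / 2) ≤ t ^ (-(d:ℝ) / 2) := by
    intro t ht
    apply Real.rpow_le_rpow_of_nonpos ht
    · nlinarith [Real.pi_gt_three]
    · linarith
  rw [← Ioc_union_Ioi_eq_Ioi (zero_le_one (α := ℝ))]
  refine IntegrableOn.union ?_ ?_
  · have h1 := (hi.mono_set (fun x (hx : x ∈ Ioc (0:ℝ) 1) => hx.1)).const_mul
      (d.factorial / q ^ d * Real.exp 1)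
    refine Integrable.mono' h1 (hm.mono_measure (Measure.restrict_mono Ioc_subset_Ioi_self le_rfl)) ?_
    filter_upwards [ae_restrict_mem measurableSet_Ioc] with t ht
    have ht0 : 0 < t := ht.1
    have hut := hupos t ht0
    have hpi := Real.pi_pos
    rw [Real.norm_of_nonneg (by positivity), ← mul_assoc]
    refine mul_le_mul_of_nonneg_right ?_ hut.le
    have h2 : t ^ (-(d:ℝ) / 2) ≤ (1 / t) ^ d := by
      rw [one_div, inv_pow, ← Real.rpow_natCast, ← Real.rpow_neg ht0.le]
      apply Real.rpow_le_rpow_of_exponent_ge ht0 ht.2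
      linarith
    have h3 := Real.pow_div_factorial_le_exp (q/t) (by positivity) d
    have h4 : (1/t)^d * Real.exp (-(q/t)) ≤ d.factorial / q^d := by
      rw [Real.exp_neg, ← div_eq_mul_inv, div_le_iff₀ (Real.exp_pos _)]
      have hf : (0:ℝ) < d.factorial := by exact_mod_cast d.factorial_pos
      calc (1/t)^d = d.factorial / q^d * ((q/t)^d / d.factorial) := by
            field_simp
            rw [← mul_pow, one_div_mul_eq_div]
        _ ≤ _ := by gcongr
    have h5 : 1 ≤ Real.exp 1 * Real.exp (-(1*t)) := by
      rw [← Real.exp_add]; apply Real.one_le_exp; linarith [ht.2]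
    calc _ ≤ (1/t)^d * Real.exp (-(q/t)) := by
          gcongr; exact (hK t ht0).trans h2
      _ ≤ d.factorial / q^d := h4
      _ ≤ d.factorial / q^d * (Real.exp 1 * Real.exp (-(1*t))) := by
          apply le_mul_of_one_le_right (by positivity) h5
      _ = _ := by ring
  · have h1 := (integrableOn_Ioi_rpow_of_lt (a := -(d:ℝ)/2) (c := 1) (by linarith) one_pos).mul_const
      (u 1)
    have hs : Ioi (1:ℝ) ⊆ Ioi 0 := Ioi_subset_Ioi zero_le_one
    refine Integrable.mono' h1 (hm.mono_measure (Measure.restrict_mono hs le_rfl)) ?_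
    filter_upwards [ae_restrict_mem measurableSet_Ioi] with t ht
    have ht0 : 0 < t := hs ht
    have ht1 : 1 < t := ht
    have hut := hupos t ht0
    have hpi := Real.pi_pos
    rw [Real.norm_of_nonneg (by positivity)]
    have h2 := hudec 1 t one_pos ht1.le
    have h3 : Real.exp (-(q/t)) ≤ 1 := by
      apply Real.exp_le_one_iff.2
      have : 0 < q / t := by positivity
      linarith
    have h4 := hK t ht0
    calc _ ≤ t ^ (-(d:ℝ) / 2) * 1 * u 1 := by gcongr
      _ = _ := by ring

lemma green_doubling {d : ℕ} (hd : 3 ≤ d) {u I : ℝ → ℝ} (hupos : ∀ t, 0 < t → 0 < u t)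
    (hudec : ∀ s t, 0 < s → s ≤ t → u t ≤ u s)
    (hi : ∀ q, 0 < q → IntegrableOn (fun t => (4 * Real.pi * t) ^ (-(d:ℝ) / 2) *
      Real.exp (-(q / t)) * u t) (Ioi 0))
    (hI : ∀ q, 0 < q → I q = ∫ t in Ioi (0:ℝ), (4 * Real.pi * t) ^ (-(d:ℝ) / 2) *
      Real.exp (-(q / t)) * u t)
    {C s₀ : ℝ} (hC : 0 < C) (hs₀ : 0 < s₀) (hdoub : ∀ s, 0 < s → s ≤ s₀ → u (s / 2) ≤ C * u s) :
    ∃ D, 0 < D ∧ ∀ q, 0 < q → q ≤ 1 → I (q / 2) ≤ D * I q := by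
  have hpi := Real.pi_pos
  have hd' : (3:ℝ) ≤ d := by exact_mod_cast hd
  have hIpos : ∀ q, 0 < q → 0 < I q := by
    intro q hq
    rw [hI q hq]
    refine setIntegral_pos (hi q hq) fun t ht => ?_
    have := hupos t ht
    positivity
  have hImono : ∀ q, 0 < q → q ≤ 1 → I 1 ≤ I q := by
    intro q hq hq1
    rw [hI q hq, hI 1 one_pos]
    refine setIntegral_mono_on (hi 1 one_pos) (hi q hq) measurableSet_Ioi ?_
    intro t ht
    have ht0 : 0 < t := ht
    have hut := hupos t ht0
    gcongr
  set E : ℝ := (2:ℝ)⁻¹ * 2⁻¹ ^ (-(d:ℝ)/2) with hE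
  have hEp : 0 < E := by positivity
  set k : ℝ → ℝ := (Ioi s₀).indicator (fun t => t ^ (-(d:ℝ)/2)) with hk
  have hki : IntegrableOn k (Ioi 0) := by
    apply Integrable.integrableOn
    rw [hk, integrable_indicator_iff measurableSet_Ioi]
    exact integrableOn_Ioi_rpow_of_lt (by linarith) hs₀
  have hk0 : ∀ t, 0 < t → 0 ≤ k t := by
    intro t ht
    apply indicator_nonneg
    intro x hx
    have : 0 < x := lt_trans hs₀ hx
    positivity
  set J := ∫ t in Ioi (0:ℝ), k t with hJ
  have hJ0 : 0 ≤ J := setIntegral_nonneg measurableSet_Ioi fun t ht => hk0 t ht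
  have hU := hupos (s₀/2) (by positivity)
  have hI1 := hIpos 1 one_pos
  refine ⟨E * (C + u (s₀/2) * J / I 1), by positivity, fun q hq hq1 => ?_⟩
  have hq2 : 0 < q / 2 := by linarith
  have hcv := integral_comp_mul_left_Ioi (fun t => (4 * Real.pi * t) ^ (-(d:ℝ) / 2) *
      Real.exp (-((q/2) / t)) * u t) 0 (b := 2⁻¹) (by norm_num)
  have hci := (integrableOn_Ioi_comp_mul_left_iff (fun t => (4 * Real.pi * t) ^ (-(d:ℝ) / 2) *
      Real.exp (-((q/2) / t)) * u t) 0 (a := 2⁻¹) (by norm_num)).2 (by simpa using hi _ hq2)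
  rw [mul_zero, ← hI _ hq2, inv_inv, smul_eq_mul] at hcv
  have hle : ∫ x in Ioi (0:ℝ), (4 * Real.pi * (2⁻¹ * x)) ^ (-(d:ℝ) / 2) *
      Real.exp (-((q/2) / (2⁻¹ * x))) * u (2⁻¹ * x) ≤
      ∫ x in Ioi (0:ℝ), (2⁻¹ ^ (-(d:ℝ)/2) * C) * ((4 * Real.pi * x) ^ (-(d:ℝ) / 2) *
      Real.exp (-(q / x)) * u x) + (2⁻¹ ^ (-(d:ℝ)/2) * u (s₀/2)) * k x := by
    refine setIntegral_mono_on hci (Integrable.add ((hi q hq).const_mul _) (hki.const_mul _))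
      measurableSet_Ioi ?_
    intro x hx
    have hx0 : 0 < x := hx
    have hux := hupos x hx0
    have e1 : (4 * Real.pi * (2⁻¹ * x)) ^ (-(d:ℝ) / 2) =
        2⁻¹ ^ (-(d:ℝ)/2) * (4 * Real.pi * x) ^ (-(d:ℝ) / 2) := by
      rw [← Real.mul_rpow (by norm_num) (by positivity)]; ring_nf
    have e2 : (q/2) / (2⁻¹ * x) = q / x := by field_simp
    have e3 : 2⁻¹ * x = x / 2 := by ring
    have hx2 := hupos (x/2) (by positivity)
    rw [e1, e2, e3]
    rcases le_or_gt x s₀ with h | h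
    · have h1 := hdoub x hx0 h
      have h2 : 0 ≤ (2⁻¹ ^ (-(d:ℝ)/2) * u (s₀/2)) * k x := by
        have := hk0 x hx0; positivity
      calc _ ≤ 2⁻¹ ^ (-(d:ℝ)/2) * (4 * Real.pi * x) ^ (-(d:ℝ) / 2) * Real.exp (-(q / x)) *
            (C * u x) := by gcongr
        _ = (2⁻¹ ^ (-(d:ℝ)/2) * C) * ((4 * Real.pi * x) ^ (-(d:ℝ) / 2) *
            Real.exp (-(q / x)) * u x) := by ring
        _ ≤ _ := by linarith
    · have h1 := hudec (s₀/2) (x/2) (by positivity) (by linarith)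
      have hkx : k x = x ^ (-(d:ℝ)/2) := by rw [hk]; exact indicator_of_mem (by exact h) _
      have h3 : Real.exp (-(q/x)) ≤ 1 := by
        apply Real.exp_le_one_iff.2
        have : 0 < q / x := by positivity
        linarith
      have hK : (4 * Real.pi * x) ^ (-(d:ℝ) / 2) ≤ x ^ (-(d:ℝ) / 2) := by
        apply Real.rpow_le_rpow_of_nonpos hx0
        · nlinarith [Real.pi_gt_three]
        · linarith
      have h2 : 0 ≤ (2⁻¹ ^ (-(d:ℝ)/2) * C) * ((4 * Real.pi * x) ^ (-(d:ℝ) / 2) *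
            Real.exp (-(q / x)) * u x) := by positivity
      calc _ ≤ 2⁻¹ ^ (-(d:ℝ)/2) * x ^ (-(d:ℝ) / 2) * 1 * u (s₀/2) := by gcongr
        _ = (2⁻¹ ^ (-(d:ℝ)/2) * u (s₀/2)) * k x := by rw [hkx]; ring
        _ ≤ _ := by linarith
  rw [integral_add ((hi q hq).const_mul _) (hki.const_mul _), integral_const_mul,
    integral_const_mul, ← hI q hq, ← hJ, hcv] at hle
  have h1 := hImono q hq hq1
  have h2 : J ≤ J / I 1 * I q := by
    rw [div_mul_eq_mul_div, le_div_iff₀ hI1]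
    gcongr
  have h3 : 2⁻¹ ^ (-(d:ℝ)/2) * u (s₀/2) * J ≤ 2⁻¹ ^ (-(d:ℝ)/2) * u (s₀/2) * (J / I 1 * I q) := by
    gcongr
  calc I (q/2) ≤ 2⁻¹ * ((2⁻¹ ^ (-(d:ℝ)/2) * C) * I q +
        2⁻¹ ^ (-(d:ℝ)/2) * u (s₀/2) * (J / I 1 * I q)) := by linarith
    _ = _ := by rw [hE]; ring

lemma exp_diff {a b r t : ℝ} (hr : 0 < r) (ha : r ≤ a) (hab : a ≤ b) (hb : b - a ≤ r) (ht : 0 < t) :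
    Real.exp (-(a^2/4/t)) - Real.exp (-(b^2/4/t)) ≤
      6 * ((b - a) / r) * Real.exp (-(r^2/4/2/t)) := by
  have ha0 : 0 < a := by linarith
  set X := a^2/4/t with hX
  set Y := b^2/4/t with hY
  have hX0 : 0 < X := by positivity
  have h1 : Real.exp (-X) - Real.exp (-Y) ≤ (Y - X) * Real.exp (-X) := by
    have h2 := Real.add_one_le_exp (-(Y - X))
    have h3 : Real.exp (-Y) = Real.exp (-(Y-X)) * Real.exp (-X) := by
      rw [← Real.exp_add]; ring_nf
    rw [h3]
    nlinarith [Real.exp_pos (-X)]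
  have h4 : Y - X ≤ 3 * ((b-a)/r) * X := by
    have e1 : Y - X = (b - a) * (b + a) / (4 * t) := by rw [hX, hY]; field_simp; ring
    have e2 : 3 * ((b-a)/r) * X = (b - a) * (3 * a * (a / r)) / (4*t) := by
      rw [hX]; field_simp
    rw [e1, e2]
    have h5 : 1 ≤ a / r := by rw [le_div_iff₀ hr]; linarith
    have h6 : 0 ≤ b - a := by linarith
    have h7 : b + a ≤ 3 * a * (a/r) := by nlinarith
    gcongr
  have h8 : X * Real.exp (-X) ≤ 2 * Real.exp (-(X/2)) := by
    have e : Real.exp (-X) = Real.exp (-(X/2)) * Real.exp (-(X/2)) := by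
      rw [← Real.exp_add]; ring_nf
    have h2 : (X/2) * Real.exp (-(X/2)) ≤ 1 := by
      have h3 := Real.add_one_le_exp (X/2)
      rw [Real.exp_neg, ← div_eq_mul_inv, div_le_one (Real.exp_pos _)]
      linarith
    rw [e]
    nlinarith [Real.exp_pos (-(X/2))]
  have h9 : Real.exp (-(X/2)) ≤ Real.exp (-(r^2/4/2/t)) := by
    apply Real.exp_le_exp.2
    have : r^2/4/2/t ≤ X/2 := by
      have e : X / 2 = a^2/4/2/t := by rw [hX]; ring
      rw [e]; gcongr
    linarith
  have h6 : 0 ≤ (b - a)/r := div_nonneg (by linarith) hr.le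
  calc _ ≤ (Y - X) * Real.exp (-X) := h1
    _ ≤ 3 * ((b-a)/r) * X * Real.exp (-X) := by gcongr
    _ = 3 * ((b-a)/r) * (X * Real.exp (-X)) := by ring
    _ ≤ 3 * ((b-a)/r) * (2 * Real.exp (-(r^2/4/2/t))) := by
      exact mul_le_mul_of_nonneg_left (by linarith) (by positivity)
    _ = _ := by ring

lemma green_diff {d : ℕ} {u I : ℝ → ℝ} (hupos : ∀ t, 0 < t → 0 < u t)
    (hi : ∀ q, 0 < q → IntegrableOn (fun t => (4 * Real.pi * t) ^ (-(d:ℝ) / 2) *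
      Real.exp (-(q / t)) * u t) (Ioi 0))
    (hI : ∀ q, 0 < q → I q = ∫ t in Ioi (0:ℝ), (4 * Real.pi * t) ^ (-(d:ℝ) / 2) *
      Real.exp (-(q / t)) * u t)
    {D : ℝ} (hD : 0 < D) (hdoub : ∀ q, 0 < q → q ≤ 1 → I (q / 2) ≤ D * I q)
    (a b r : ℝ) (hr : 0 < r) (hr1 : r < 1) (ha : r ≤ a) (hab : a ≤ b) :
    |I (a^2/4) - I (b^2/4)| ≤ (1 + 6 * D) * I (r^2/4) * min 1 ((b-a)/r) := by
  have hpi := Real.pi_pos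
  have hIpos : ∀ q, 0 < q → 0 < I q := by
    intro q hq
    rw [hI q hq]
    refine setIntegral_pos (hi q hq) fun t ht => ?_
    have := hupos t ht
    positivity
  have hImono : ∀ p q, 0 < p → p ≤ q → I q ≤ I p := by
    intro p q hp hpq
    have hq : 0 < q := by linarith
    rw [hI q hq, hI p hp]
    refine setIntegral_mono_on (hi q hq) (hi p hp) measurableSet_Ioi ?_
    intro t ht
    have ht0 : 0 < t := ht
    have hut := hupos t ht0
    gcongr
  have ha0 : 0 < a := by linarith
  have hb0 : 0 < b := by linarith
  have h1 := hImono (a^2/4) (b^2/4) (by positivity) (by gcongr)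
  have h2 := hImono (r^2/4) (a^2/4) (by positivity) (by gcongr)
  have h3 := hIpos (b^2/4) (by positivity)
  have h4 := hIpos (r^2/4) (by positivity)
  rw [abs_of_nonneg (by linarith)]
  rcases le_total 1 ((b-a)/r) with h | h
  · rw [min_eq_left h, mul_one]
    nlinarith [mul_pos hD h4]
  · rw [min_eq_right h]
    have hbr : b - a ≤ r := by rwa [div_le_one hr] at h
    have hq : 0 < r^2/4 := by positivity
    have h5 : I (a^2/4) - I (b^2/4) ≤ (6 * ((b-a)/r)) * I (r^2/4/2) := by
      rw [hI _ (by positivity), hI (b^2/4) (by positivity), hI (r^2/4/2) (by positivity),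
        ← integral_sub (hi _ (by positivity)) (hi _ (by positivity)), ← integral_const_mul]
      refine setIntegral_mono_on ((hi _ (by positivity)).sub (hi _ (by positivity)))
        ((hi _ (by positivity)).const_mul _) measurableSet_Ioi ?_
      intro t ht
      have ht0 : 0 < t := ht
      have hut := hupos t ht0
      have h6 := exp_diff hr ha hab hbr ht0
      have h7 : 0 ≤ (4 * Real.pi * t) ^ (-(d:ℝ) / 2) * u t := by positivity
      have h8 := mul_le_mul_of_nonneg_left h6 h7
      linarith
    have h6 := hdoub (r^2/4) hq (by nlinarith)
    have h7 : 0 ≤ (b-a)/r := div_nonneg (by linarith) hr.le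
    calc _ ≤ (6 * ((b-a)/r)) * I (r^2/4/2) := h5
      _ ≤ (6 * ((b-a)/r)) * (D * I (r^2/4)) := by gcongr
      _ ≤ _ := by nlinarith [mul_nonneg h4.le h7]

end GreenAux

/-- Green function difference estimate: under (A-1) with `α ∈ [0,2]` ((A-4) in addition when
`α = 2`) and (A-3), there is `c > 0` such that for every `r ∈ (0,1)` and all
`x, y ∈ ℝ^d` with `|x| ≥ r`, `|y| ≥ r`:
`|G(x) - G(y)| ≤ c g(r) min(1, |x-y|/r)`, where `G(x) = g(|x|)`. -/
theorem green_difference_estimate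
    (d : ℕ) (hd : 3 ≤ d)
    (α : ℝ) (hα0 : 0 ≤ α) (hα2 : α ≤ 2)
    (μ φ φ' : ℝ → ℝ)
    (hμpos : ∀ t, 0 < t → 0 < μ t)
    (hμdec : ∀ s t, 0 < s → s ≤ t → μ t ≤ μ s)
    (hμint : IntegrableOn (fun t => min 1 t * μ t) (Ioi 0))
    (hφ : ∀ l, 0 < l → φ l = ∫ t in Ioi (0:ℝ), (1 - Real.exp (-(l * t))) * μ t)
    (hφ' : ∀ l, 0 < l → φ' l = ∫ t in Ioi (0:ℝ), t * Real.exp (-(l * t)) * μ t)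
    (hA1 : ∀ x, 0 < x →
      Tendsto (fun l => φ' (l * x) / φ' l) atTop (𝓝 (x ^ (α / 2 - 1))))
    (hA4 : α = 2 → ∃ ψ' : ℝ → ℝ,
      (∀ l, 0 < l → HasDerivAt (fun s => s / φ s) (ψ' l) l) ∧
      ∀ x, 0 < x → Tendsto (fun l => ψ' (l * x) / ψ' l) atTop (𝓝 x⁻¹))
    (u : ℝ → ℝ)
    (hupos : ∀ t, 0 < t → 0 < u t)
    (hudec : ∀ s t, 0 < s → s ≤ t → u t ≤ u s)
    (hu : ∀ l, 0 < l → ∫ t in Ioi (0:ℝ), Real.exp (-(l * t)) * u t = 1 / φ l)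
    (g : ℝ → ℝ)
    (hg : ∀ r, 0 < r → g r =
      ∫ t in Ioi (0:ℝ), (4 * Real.pi * t) ^ (-(d:ℝ) / 2) * Real.exp (-(r ^ 2 / (4 * t))) * u t) :
    ∃ c : ℝ, 0 < c ∧ ∀ r, 0 < r → r < 1 → ∀ x y : EuclideanSpace ℝ (Fin d),
      r ≤ ‖x‖ → r ≤ ‖y‖ →
        |g ‖x‖ - g ‖y‖| ≤ c * g r * min 1 (‖x - y‖ / r) := by
  have hφpos : ∀ l, 0 < l → 0 < φ l := by
    intro l hl
    rw [hφ l hl]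
    refine GreenAux.setIntegral_pos
      (GreenAux.mu_one_sub_integrable hμpos hμdec hμint l hl) fun t ht => ?_
    have h1 : Real.exp (-(l * t)) < 1 := Real.exp_lt_one_iff.2 (by nlinarith [mul_pos hl ht])
    exact mul_pos (by linarith) (hμpos t ht)
  have hφ'i := GreenAux.mu_t_exp_integrable hμpos hμdec hμint
  have hφ'pos : ∀ l, 0 < l → 0 < φ' l := by
    intro l hl
    rw [hφ' l hl]
    refine GreenAux.setIntegral_pos (hφ'i l hl) fun t ht => ?_
    have := hμpos t ht
    positivity
  have hφ'dec : ∀ a b, 0 < a → a ≤ b → φ' b ≤ φ' a := by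
    intro a b ha hab
    rw [hφ' a ha, hφ' b (by linarith)]
    refine setIntegral_mono_on (hφ'i _ (by linarith)) (hφ'i _ ha) measurableSet_Ioi ?_
    intro t ht
    have ht0 : 0 < t := ht
    have hut := hμpos t ht0
    gcongr
  have hder : ∀ l, 0 < l → HasDerivAt φ (φ' l) l := by
    intro l hl
    have h := GreenAux.laplace_deriv hμpos hμdec 1 hφ'i l hl
      (GreenAux.mu_one_sub_integrable hμpos hμdec hμint l hl)
    rw [← hφ' l hl] at h
    refine h.congr_of_eventuallyEq ?_
    filter_upwards [Ioi_mem_nhds hl] with s hs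
    exact hφ s hs
  have hui : ∀ l, 0 < l → IntegrableOn (fun t => Real.exp (-(l * t)) * u t) (Ioi 0) := by
    intro l hl
    apply GreenAux.integrableOn_of_pos
    rw [hu l hl]
    have := hφpos l hl
    positivity
  have htui := GreenAux.t_exp_integrable hupos hudec hui
  have hV : ∀ l, 0 < l →
      (∫ t in Ioi (0:ℝ), t * Real.exp (-(l * t)) * u t) = φ' l / φ l ^ 2 := by
    intro l hl
    have h0 : IntegrableOn (fun t => (0 - Real.exp (-(l * t))) * u t) (Ioi 0) := by
      simpa only [zero_sub, neg_mul] using! (hui l hl).neg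
    have h := GreenAux.laplace_deriv hupos hudec 0 htui l hl h0
    have h1 : HasDerivAt (fun s => -(φ s)⁻¹) (∫ t in Ioi (0:ℝ), t * Real.exp (-(l * t)) * u t) l := by
      refine h.congr_of_eventuallyEq ?_
      filter_upwards [Ioi_mem_nhds hl] with s hs
      simp only [zero_sub, neg_mul]
      rw [integral_neg, hu s hs, one_div]
    have h2 := ((hder l hl).inv (hφpos l hl).ne').neg
    have h3 := h1.unique h2
    rw [h3]; ring
  obtain ⟨x, L, hx, hL, hsmall⟩ := GreenAux.V_small hα2 hφpos hφ'pos hder hφ'dec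
    (GreenAux.phi_tendsto hφpos hupos hudec hui hu) hA1 hV
  obtain ⟨C, s₀, hC, hs₀, hdoub⟩ := GreenAux.u_doubling hupos hudec htui (fun _ _ => rfl)
    x L hx hL hsmall
  have hgi := GreenAux.green_integrable hd hupos hudec (hui 1 one_pos)
  obtain ⟨D, hD, hgd⟩ := GreenAux.green_doubling hd hupos hudec hgi (fun _ _ => rfl) hC hs₀ hdoub
  have key := GreenAux.green_diff hupos hgi (fun _ _ => rfl) hD hgd
  have hgI : ∀ s, 0 < s → g s = ∫ t in Ioi (0:ℝ), (4 * Real.pi * t) ^ (-(d:ℝ) / 2) *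
      Real.exp (-((s ^ 2 / 4) / t)) * u t := by
    intro s hs
    rw [hg s hs]
    simp only [div_div]
  have key2 : ∀ a b r, 0 < r → r < 1 → r ≤ a → a ≤ b →
      |g a - g b| ≤ (1 + 6 * D) * g r * min 1 ((b - a) / r) := by
    intro a b r hr hr1 ha hab
    rw [hgI a (by linarith), hgI b (by linarith), hgI r hr]
    exact key a b r hr hr1 ha hab
  refine ⟨1 + 6 * D, by positivity, fun r hr hr1 x y hx hy => ?_⟩
  have hg0 : 0 ≤ g r := by
    rw [hgI r hr]
    refine setIntegral_nonneg measurableSet_Ioi fun t ht => ?_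
    have ht0 : 0 < t := ht
    have := hupos t ht0
    have := Real.pi_pos
    positivity
  have hn := abs_norm_sub_norm_le x y
  rcases le_total ‖x‖ ‖y‖ with h | h
  · refine (key2 _ _ r hr hr1 hx h).trans ?_
    have : ‖y‖ - ‖x‖ ≤ ‖x - y‖ := by
      rw [abs_sub_comm] at hn; exact (le_abs_self _).trans hn
    gcongr
  · rw [abs_sub_comm]
    refine (key2 _ _ r hr hr1 hy h).trans ?_
    have : ‖x‖ - ‖y‖ ≤ ‖x - y‖ := (le_abs_self _).trans hn
    gcongr
end

section
/- Let α ∈ (0,2), let ℓ : (0,∞) → (0,∞) be slowly varying at infinity (ℓ(λx)/ℓ(λ) → 1 as λ → +∞ for every x > 0), and assume φ(λ)/(λ^{α/2} ℓ(λ)) → 1 as λ → +∞. Then: (a) for every x > 0, φ'(λx)/φ'(λ) → x^{α/2−1} as λ → +∞; and (b) for every integer d ≥ 3, the Lévy density of the subordinate Brownian motion satisfies j(r) ≍ r^{−d−α} ℓ(r^{−2}) as r → 0+. -/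
open MeasureTheory Set Filter Topology

namespace SLJ

lemma aesm (μ : ℝ → ℝ) (hμdec : ∀ s t, 0 < s → s ≤ t → μ t ≤ μ s) :
    AEStronglyMeasurable μ (volume.restrict (Ioi (0:ℝ))) :=
  (aemeasurable_restrict_of_antitoneOn measurableSet_Ioi
    (fun s hs t _ hst => hμdec s t hs hst)).aestronglyMeasurable

lemma int_dom (μ : ℝ → ℝ) (hμpos : ∀ t, 0 < t → 0 < μ t)
    (hμdec : ∀ s t, 0 < s → s ≤ t → μ t ≤ μ s)
    (hμint : IntegrableOn (fun t => min 1 t * μ t) (Ioi 0))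
    (f : ℝ → ℝ) (hf : Continuous f) (C : ℝ) (h : ∀ t, 0 < t → |f t| ≤ C * min 1 t) :
    IntegrableOn (fun t => f t * μ t) (Ioi 0) := by
  refine Integrable.mono' (hμint.const_mul C)
    (hf.aestronglyMeasurable.mul (aesm μ hμdec)) ?_
  refine (ae_restrict_iff' measurableSet_Ioi).2 (Eventually.of_forall fun t ht => ?_)
  have ht : 0 < t := ht
  have := hμpos t ht
  rw [Real.norm_eq_abs, abs_mul, abs_of_pos this, ← mul_assoc]
  exact mul_le_mul_of_nonneg_right (h t ht) this.le

lemma int_phi (μ : ℝ → ℝ) (hμpos : ∀ t, 0 < t → 0 < μ t)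
    (hμdec : ∀ s t, 0 < s → s ≤ t → μ t ≤ μ s)
    (hμint : IntegrableOn (fun t => min 1 t * μ t) (Ioi 0)) (l : ℝ) (hl : 0 < l) :
    IntegrableOn (fun t => (1 - Real.exp (-(l * t))) * μ t) (Ioi 0) := by
  refine int_dom μ hμpos hμdec hμint _ (by fun_prop) (1 + l) fun t ht => ?_
  have h1 : Real.exp (-(l * t)) ≤ 1 := Real.exp_le_one_iff.2 (by nlinarith [mul_pos hl ht])
  have h2 := Real.exp_pos (-(l * t))
  have h3 := Real.add_one_le_exp (-(l * t))
  rw [abs_of_nonneg (by linarith)]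
  rcases min_cases 1 t with ⟨h, _⟩ | ⟨h, _⟩ <;> rw [h] <;> nlinarith

lemma int_phi' (μ : ℝ → ℝ) (hμpos : ∀ t, 0 < t → 0 < μ t)
    (hμdec : ∀ s t, 0 < s → s ≤ t → μ t ≤ μ s)
    (hμint : IntegrableOn (fun t => min 1 t * μ t) (Ioi 0)) (l : ℝ) (hl : 0 < l) :
    IntegrableOn (fun t => t * Real.exp (-(l * t)) * μ t) (Ioi 0) := by
  refine int_dom μ hμpos hμdec hμint _ (by fun_prop) (1 + 1 / l) fun t ht => ?_
  have h1 : Real.exp (-(l * t)) ≤ 1 := Real.exp_le_one_iff.2 (by nlinarith [mul_pos hl ht])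
  have h2 := Real.exp_pos (-(l * t))
  have h3 : t * Real.exp (-(l * t)) ≤ 1 / l := by
    rw [le_div_iff₀ hl, Real.exp_neg]
    have := Real.add_one_le_exp (l * t)
    have h4 := Real.exp_pos (l * t)
    rw [mul_right_comm, ← div_eq_mul_inv, div_le_one h4]
    linarith
  have h5 : 0 < 1 / l := by positivity
  rw [abs_of_nonneg (by positivity)]
  rcases min_cases 1 t with ⟨h, _⟩ | ⟨h, _⟩ <;> rw [h] <;> nlinarith

/-- lower bound for a nonnegative integral over an interval -/
lemma const_le (f : ℝ → ℝ) (hf : IntegrableOn f (Ioi 0)) (h0 : ∀ t, 0 < t → 0 ≤ f t)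
    (a b c : ℝ) (ha : 0 < a) (hab : a ≤ b) (h : ∀ t, a < t → t ≤ b → c ≤ f t) :
    (b - a) * c ≤ ∫ t in Ioi (0:ℝ), f t := by
  have hsub : Ioc a b ⊆ Ioi (0:ℝ) := fun t ht => lt_trans ha ht.1
  calc (b - a) * c = ∫ t in Ioc a b, c := by
        rw [setIntegral_const, Real.volume_real_Ioc_of_le hab, smul_eq_mul]
    _ ≤ ∫ t in Ioc a b, f t :=
        setIntegral_mono_on (by simp) (hf.mono_set hsub) measurableSet_Ioc
          (fun t ht => h t ht.1 ht.2)
    _ ≤ ∫ t in Ioi (0:ℝ), f t := by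
        refine setIntegral_mono_set hf ?_ hsub.eventuallyLE
        exact (ae_restrict_iff' measurableSet_Ioi).2 (Eventually.of_forall fun t ht => h0 t ht)

lemma ker_int (d : ℕ) (hd : 3 ≤ d) :
    IntegrableOn (fun s : ℝ => (4 * Real.pi * s) ^ (-(d:ℝ) / 2) * Real.exp (-(1 / (4 * s)))
      * (1 + 1 / s ^ 2)) (Ioi 0) := by
  have hd' : (3:ℝ) ≤ d := by exact_mod_cast hd
  have hmeas : ∀ S : Set ℝ, AEStronglyMeasurable (fun s : ℝ =>
      (4 * Real.pi * s) ^ (-(d:ℝ) / 2) * Real.exp (-(1 / (4 * s)))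
      * (1 + 1 / s ^ 2)) (volume.restrict S) := fun S => by
    apply Measurable.aestronglyMeasurable
    fun_prop
  have key : ∀ s : ℝ, 0 < s → (4 * Real.pi * s) ^ (-(d:ℝ) / 2) ≤ s ^ (-(d:ℝ) / 2) := by
    intro s hs
    apply Real.rpow_le_rpow_of_nonpos hs
    · nlinarith [Real.pi_gt_three]
    · linarith
  rw [← Ioc_union_Ioi_eq_Ioi (zero_le_one' ℝ)]
  refine IntegrableOn.union ?_ ?_
  · refine Integrable.mono' (g := fun _ => 2 * ((d+2).factorial * 4 ^ (d+2) : ℝ))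
      (integrable_const _) (hmeas _) ?_
    refine (ae_restrict_iff' measurableSet_Ioc).2 (Eventually.of_forall fun s hs => ?_)
    obtain ⟨hs0, hs1⟩ := hs
    have k1 := key s hs0
    have k2 : Real.exp (-(1 / (4 * s))) ≤ (d+2).factorial * 4 ^ (d+2) * s ^ (d+2) := by
      have := Real.pow_div_factorial_le_exp (1 / (4 * s)) (by positivity) (d+2)
      rw [Real.exp_neg]
      refine (inv_anti₀ (by positivity) this).trans (le_of_eq ?_)
      rw [inv_div, div_pow, one_pow, mul_pow]
      field_simp
    have k3 : s ^ (-(d:ℝ) / 2) ≤ s ^ (-(d:ℝ)) :=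
      Real.rpow_le_rpow_of_exponent_ge hs0 hs1 (by linarith)
    have k4 : 1 + 1 / s ^ 2 ≤ 2 / s ^ 2 := by
      rw [le_div_iff₀ (by positivity), add_mul, div_mul_cancel₀ _ (by positivity)]
      nlinarith
    rw [Real.norm_eq_abs, abs_of_nonneg (by positivity)]
    calc _ ≤ s ^ (-(d:ℝ)) * ((d+2).factorial * 4 ^ (d+2) * s ^ (d+2)) * (2 / s ^ 2) := by
          gcongr
          exact k1.trans k3
      _ = _ := by
          rw [Real.rpow_neg hs0.le, Real.rpow_natCast]
          field_simp
          ring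
  · refine Integrable.mono' (g := fun s => 2 * s ^ (-(d:ℝ) / 2))
      ((integrableOn_Ioi_rpow_of_lt (by linarith) one_pos).const_mul 2) (hmeas _) ?_
    refine (ae_restrict_iff' measurableSet_Ioi).2 (Eventually.of_forall fun s hs => ?_)
    have hs1 : (1:ℝ) < s := hs
    have hs0 : 0 < s := by linarith
    have k1 := key s hs0
    have k2 : Real.exp (-(1 / (4 * s))) ≤ 1 := by
      apply Real.exp_le_one_iff.2
      have : 0 < 1 / (4 * s) := by positivity
      linarith
    have k4 : 1 + 1 / s ^ 2 ≤ 2 := by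
      have : 1 / s ^ 2 ≤ 1 := by
        rw [div_le_one (by positivity)]; nlinarith
      linarith
    rw [Real.norm_eq_abs, abs_of_nonneg (by positivity)]
    calc _ ≤ s ^ (-(d:ℝ) / 2) * 1 * 2 := by gcongr
      _ = _ := by ring

lemma scale (μ : ℝ → ℝ) (d : ℕ) (r : ℝ) (hr : 0 < r) :
    (∫ t in Ioi (0:ℝ),
          (4 * Real.pi * t) ^ (-(d:ℝ) / 2) * Real.exp (-(r ^ 2 / (4 * t))) * μ t)
    = r ^ 2 * r ^ (-(d:ℝ)) * ∫ s in Ioi (0:ℝ),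
          (4 * Real.pi * s) ^ (-(d:ℝ) / 2) * Real.exp (-(1 / (4 * s))) * μ (r ^ 2 * s) := by
  have hr2 : 0 < r ^ 2 := by positivity
  have := integral_comp_mul_left_Ioi (fun t => 
    (4 * Real.pi * t) ^ (-(d:ℝ) / 2) * Real.exp (-(r ^ 2 / (4 * t))) * μ t) 0 hr2
  rw [mul_zero, smul_eq_mul] at this
  rw [← inv_mul_eq_iff_eq_mul₀ (by positivity)] 
  rw [mul_inv, mul_assoc, mul_comm (r ^ (-(d:ℝ)))⁻¹, ← mul_assoc, ← this, mul_comm, ← integral_const_mul]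
  refine setIntegral_congr_fun measurableSet_Ioi fun s hs => ?_
  have hs : 0 < s := hs
  have e1 : (4 * Real.pi * (r ^ 2 * s)) ^ (-(d:ℝ) / 2)
      = (4 * Real.pi * s) ^ (-(d:ℝ) / 2) * r ^ (-(d:ℝ)) := by
    rw [show 4 * Real.pi * (r ^ 2 * s) = (4 * Real.pi * s) * r ^ 2 by ring,
      Real.mul_rpow (by positivity) (by positivity), ← Real.rpow_natCast r 2,
      ← Real.rpow_mul hr.le]
    congr 2
    push_cast
    ring
  have e2 : r ^ 2 / (4 * (r ^ 2 * s)) = 1 / (4 * s) := by field_simp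
  have e3 : 0 < r ^ (-(d:ℝ)) := by positivity
  simp only [e1, e2]
  field_simp

end SLJ
open SLJ



/-- If `φ(λ) ∼ λ^{α/2} ℓ(λ)` at infinity with `α ∈ (0,2)` and `ℓ` slowly varying, then
(a) `φ'` is regularly varying at infinity with index `α/2 - 1`, and (b) for every `d ≥ 3`
the Lévy density of the subordinate Brownian motion satisfies `j(r) ≍ r^{-d-α} ℓ(r⁻²)`
as `r → 0+`. -/
theorem stable_like_jump_asymp
    (α : ℝ) (hα0 : 0 < α) (hα2 : α < 2)
    (μ φ φ' : ℝ → ℝ)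
    (hμpos : ∀ t, 0 < t → 0 < μ t)
    (hμdec : ∀ s t, 0 < s → s ≤ t → μ t ≤ μ s)
    (hμint : IntegrableOn (fun t => min 1 t * μ t) (Ioi 0))
    (hφ : ∀ l, 0 < l → φ l = ∫ t in Ioi (0:ℝ), (1 - Real.exp (-(l * t))) * μ t)
    (hφ' : ∀ l, 0 < l → φ' l = ∫ t in Ioi (0:ℝ), t * Real.exp (-(l * t)) * μ t)
    (ℓ : ℝ → ℝ)
    (hℓpos : ∀ t, 0 < t → 0 < ℓ t)
    (hℓslow : ∀ x, 0 < x → Tendsto (fun l => ℓ (l * x) / ℓ l) atTop (𝓝 1))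
    (hφasym : Tendsto (fun l => φ l / (l ^ (α / 2) * ℓ l)) atTop (𝓝 1)) :
    (∀ x, 0 < x →
      Tendsto (fun l => φ' (l * x) / φ' l) atTop (𝓝 (x ^ (α / 2 - 1)))) ∧
    (∀ d : ℕ, 3 ≤ d → ∃ c C r₀ : ℝ, 0 < c ∧ c ≤ C ∧ 0 < r₀ ∧ ∀ r, 0 < r → r < r₀ →
      c * (r ^ (-(d:ℝ) - α) * ℓ (r ^ (-2 : ℝ))) ≤
        (∫ t in Ioi (0:ℝ),
          (4 * Real.pi * t) ^ (-(d:ℝ) / 2) * Real.exp (-(r ^ 2 / (4 * t))) * μ t) ∧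
      (∫ t in Ioi (0:ℝ),
          (4 * Real.pi * t) ^ (-(d:ℝ) / 2) * Real.exp (-(r ^ 2 / (4 * t))) * μ t) ≤
        C * (r ^ (-(d:ℝ) - α) * ℓ (r ^ (-2 : ℝ)))) := by
  set β := α / 2 with hβ
  have hβ0 : 0 < β := by positivity
  have hβ1 : β < 1 := by rw [hβ]; linarith
  have iφ := int_phi μ hμpos hμdec hμint
  have iφ' := int_phi' μ hμpos hμdec hμint
  -- positivity of φ and bound on μ
  set q : ℝ := 1 - Real.exp (-(1/2)) with hq
  have hq0 : 0 < q := by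
    have : Real.exp (-(1/2)) < 1 := by rw [← Real.exp_zero]; exact Real.exp_lt_exp.2 (by norm_num)
    linarith
  have hnn : ∀ l, 0 < l → ∀ t, 0 < t → 0 ≤ (1 - Real.exp (-(l * t))) * μ t := by
    intro l hl t ht
    have h1 : Real.exp (-(l * t)) ≤ 1 := Real.exp_le_one_iff.2 (by nlinarith [mul_pos hl ht])
    exact mul_nonneg (by linarith) (hμpos t ht).le
  have hμφ : ∀ l, 0 < l → μ (1 / l) * q / (2 * l) ≤ φ l := by
    intro l hl
    rw [hφ l hl]
    refine le_trans (le_of_eq ?_) (const_le _ (iφ l hl) (hnn l hl) (1 / (2 * l)) (1 / l)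
      (q * μ (1 / l)) (by positivity) (one_div_le_one_div_of_le hl (by linarith)) ?_)
    · field_simp
      ring
    · intro t h1 h2
      have ht : 0 < t := lt_trans (by positivity) h1
      have h3 := hμdec t (1 / l) ht h2
      have h4 : Real.exp (-(l * t)) ≤ Real.exp (-(1/2)) := by
        apply Real.exp_le_exp.2
        rw [div_lt_iff₀ (by positivity)] at h1
        linarith
      have h5 := hμpos (1 / l) (by positivity)
      exact mul_le_mul (by linarith) h3 h5.le (by linarith)
  have hφpos : ∀ l, 0 < l → 0 < φ l := by
    intro l hl
    have := hμpos (1 / l) (by positivity)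
    exact lt_of_lt_of_le (by positivity) (hμφ l hl)
  -- concavity
  have hconc : ∀ l x, 0 < l → 1 ≤ x → φ (l * x) ≤ x * φ l := by
    intro l x hl hx
    have hx0 : 0 < x := by linarith
    rw [hφ l hl, hφ _ (mul_pos hl hx0), ← integral_const_mul]
    refine setIntegral_mono_on (iφ _ (mul_pos hl hx0)) ((iφ l hl).const_mul x)
      measurableSet_Ioi fun t ht => ?_
    have hb := one_add_mul_self_le_rpow_one_add (s := Real.exp (-(l * t)) - 1)
      (by linarith [Real.exp_pos (-(l * t))]) hx
    rw [add_sub_cancel, ← Real.exp_mul] at hb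
    rw [← mul_assoc]
    refine mul_le_mul_of_nonneg_right ?_ (hμpos t ht).le
    rw [show -(l * x * t) = -(l * t) * x by ring]
    linarith
  -- tangent inequality
  have htan : ∀ l x, 0 < l → 0 < x → φ (l * x) - φ l ≤ l * (x - 1) * φ' l := by
    intro l x hl hx
    rw [hφ l hl, hφ _ (mul_pos hl hx), hφ' l hl, ← integral_const_mul,
      ← integral_sub (iφ _ (mul_pos hl hx)) (iφ l hl)]
    refine setIntegral_mono_on ((iφ _ (mul_pos hl hx)).sub (iφ l hl)) ((iφ' l hl).const_mul _)
      measurableSet_Ioi fun t ht => ?_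
    have h1 := Real.add_one_le_exp (-(l * t * (x - 1)))
    have h2 : Real.exp (-(l * x * t)) = Real.exp (-(l * t)) * Real.exp (-(l * t * (x - 1))) := by
      rw [← Real.exp_add]; congr 1; ring
    have h3 := Real.exp_pos (-(l * t))
    have h4 := hμpos t ht
    rw [h2]
    have : 0 ≤ Real.exp (-(l * t)) * μ t * (Real.exp (-(l * t * (x - 1))) - (-(l * t * (x - 1)) + 1)) := by
      apply mul_nonneg (by positivity) (by linarith)
    nlinarith
  -- regular variation of φ
  have hRV : ∀ x, 0 < x → Tendsto (fun l => φ (l * x) / φ l) atTop (𝓝 (x ^ β)) := by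
    intro x hx
    have h1 : Tendsto (fun l : ℝ => l * x) atTop atTop := tendsto_id.atTop_mul_const hx
    have h2 := ((hφasym.comp h1).div hφasym one_ne_zero).mul ((hℓslow x hx).const_mul (x ^ β))
    simp only [div_one, mul_one, one_mul] at h2
    refine h2.congr' ?_
    filter_upwards [eventually_gt_atTop 0] with l hl
    have a1 := hℓpos l hl
    have a2 := hℓpos _ (mul_pos hl hx)
    have a3 := hφpos l hl
    have a4 : 0 < l ^ β := by positivity
    have a5 : 0 < x ^ β := by positivity
    simp only [Function.comp, Pi.div_apply]
    rw [Real.mul_rpow hl.le hx.le]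
    field_simp
  -- monotone density
  have hMD : Tendsto (fun l => l * φ' l / φ l) atTop (𝓝 β) := by
    have hder : HasDerivAt (fun x : ℝ => x ^ β) β 1 := by
      simpa using Real.hasDerivAt_rpow_const (x := 1) (p := β) (Or.inl one_ne_zero)
    have hs := hasDerivAt_iff_tendsto_slope.1 hder
    have hsl : ∀ x, 0 < x → Tendsto (fun l => (φ (l * x) / φ l - 1) / (x - 1)) atTop
        (𝓝 (slope (fun x : ℝ => x ^ β) 1 x)) := by
      intro x hx
      rw [slope_def_field, Real.one_rpow]
      exact ((hRV x hx).sub_const 1).div_const _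
    refine tendsto_order.2 ⟨fun a ha => ?_, fun a ha => ?_⟩
    · have h1 := (hs.mono_left (nhdsWithin_mono (s := Ioi 1) 1 (fun y hy => ne_of_gt hy))).eventually
        (lt_mem_nhds ha)
      obtain ⟨x, hx, hx1⟩ := (h1.and self_mem_nhdsWithin).exists
      have hx1 : 1 < x := hx1
      filter_upwards [(hsl x (by linarith)).eventually (lt_mem_nhds hx), eventually_gt_atTop 0]
        with l h2 hl
      refine h2.trans_le ?_
      have h3 := htan l x hl (by linarith)
      have h4 := hφpos l hl
      have h5 : 0 < x - 1 := by linarith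
      rw [div_le_iff₀ h5, div_mul_eq_mul_div, le_div_iff₀ h4, sub_mul, div_mul_cancel₀ _ h4.ne']
      linarith
    · have h1 := (hs.mono_left (nhdsWithin_mono (s := Iio 1) 1 (fun y hy => ne_of_lt hy))).eventually
        (gt_mem_nhds ha)
      obtain ⟨x, ⟨hx, hx1⟩, hx0⟩ := ((h1.and self_mem_nhdsWithin).and
        (mem_nhdsWithin_of_mem_nhds (lt_mem_nhds one_pos))).exists
      have hx1 : x < 1 := hx1
      have hx0 : 0 < x := hx0
      filter_upwards [(hsl x (by linarith)).eventually (gt_mem_nhds hx), eventually_gt_atTop 0]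
        with l h2 hl
      refine lt_of_le_of_lt ?_ h2
      have h3 := htan l x hl (by linarith)
      have h4 := hφpos l hl
      have h5 : x - 1 < 0 := by linarith
      rw [le_div_iff_of_neg h5, div_mul_eq_mul_div, le_div_iff₀ h4, sub_mul,
        div_mul_cancel₀ _ h4.ne']
      linarith
  have hA : ∀ x, 0 < x →
      Tendsto (fun l => φ' (l * x) / φ' l) atTop (𝓝 (x ^ (β - 1))) := by
    intro x hx
    have h1 : Tendsto (fun l : ℝ => l * x) atTop atTop := tendsto_id.atTop_mul_const hx
    have h2 := (((hMD.comp h1).div hMD hβ0.ne').mul (hRV x hx)).div_const x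
    rw [div_self hβ0.ne', one_mul, ← Real.rpow_sub_one hx.ne'] at h2
    refine h2.congr' ?_
    filter_upwards [eventually_gt_atTop 0] with l hl
    have a3 := hφpos l hl
    have a4 := hφpos _ (mul_pos hl hx)
    simp only [Function.comp, Pi.div_apply]
    field_simp
  refine ⟨hA, fun d hd => ?_⟩
  -- lower bound on μ
  obtain ⟨a, ha0, ha1, ha⟩ : ∃ a : ℝ, 0 < a ∧ a < 1 ∧ Real.exp 1 * (1 / a) ^ (β - 1) < 1 / 2 := by
    have h1 : Tendsto (fun y : ℝ => Real.exp 1 * y ^ (β - 1)) atTop (𝓝 (Real.exp 1 * 0)) := by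
      have := (tendsto_rpow_neg_atTop (y := 1 - β) (by linarith)).const_mul (Real.exp 1)
      simpa using this
    rw [mul_zero] at h1
    obtain ⟨y, h2, h3⟩ := ((h1.eventually (gt_mem_nhds (by norm_num : (0:ℝ) < 1 / 2))).and
      (eventually_gt_atTop 1)).exists
    refine ⟨1 / y, by positivity, ?_, ?_⟩
    · rw [div_lt_one (by linarith)]; exact h3
    · simpa using h2
  have hμlow : ∀ᶠ l in atTop, β / 4 * (l * φ l) ≤ μ (a / l) := by
    have h1 := ((hA (1 / a) (by positivity)).const_mul (Real.exp 1)).eventually (gt_mem_nhds ha)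
    have h2 := hMD.eventually (lt_mem_nhds (by linarith : β / 2 < β))
    filter_upwards [h1, h2, eventually_gt_atTop 0] with l h1 h2 hl
    have hφl := hφpos l hl
    rw [lt_div_iff₀ hφl] at h2
    have hφ'l : 0 < φ' l := by
      have : 0 < l * φ' l := lt_trans (by positivity) h2
      exact pos_of_mul_pos_right this hl.le
    rw [← mul_div_assoc, div_lt_iff₀ hφ'l] at h1
    have hla : 0 < l * (1 / a) := by positivity
    have hal : 0 < a / l := by positivity
    -- splitting bound
    have hexp : IntegrableOn (fun t : ℝ => t * Real.exp (-(l * t))) (Ioi 0) := by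
      have := integrableOn_rpow_mul_exp_neg_mul_rpow (p := 1) (s := 1) (b := l) (by norm_num) (by norm_num) hl
      simpa using this
    have hexpv : ∫ t in Ioi (0:ℝ), t * Real.exp (-(l * t)) = 1 / l ^ 2 := by
      have := Real.integral_rpow_mul_exp_neg_mul_Ioi (a := 2) (r := l) (by norm_num) hl
      rw [show (2:ℝ) - 1 = 1 by norm_num] at this
      simp only [Real.rpow_one, Real.Gamma_two, mul_one] at this
      rw [this]
      norm_num
    have hsplit : φ' l ≤ Real.exp 1 * φ' (l * (1 / a)) + μ (a / l) * (1 / l ^ 2) := by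
      rw [← hexpv, hφ' l hl, hφ' _ hla, ← integral_const_mul, ← integral_const_mul,
        ← integral_add ((iφ' _ hla).const_mul _) (hexp.const_mul _)]
      refine setIntegral_mono_on (iφ' l hl) (((iφ' _ hla).const_mul _).add (hexp.const_mul _))
        measurableSet_Ioi fun t ht => ?_
      have ht : 0 < t := ht
      have m1 := hμpos t ht
      have m2 := hμpos _ hal
      rcases le_total t (a / l) with htl | htl
      · have e1 : Real.exp (-(l * t)) ≤ Real.exp 1 * Real.exp (-(l * (1 / a) * t)) := by
          rw [← Real.exp_add]
          apply Real.exp_le_exp.2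
          have e2 : l * (1 / a) * t ≤ 1 := by
            rw [le_div_iff₀ hl] at htl
            rw [mul_one_div, div_mul_eq_mul_div, div_le_one ha0]
            linarith
          have : 0 < l * t := by positivity
          linarith
        have e3 : t * Real.exp (-(l * t)) * μ t ≤
            t * (Real.exp 1 * Real.exp (-(l * (1 / a) * t))) * μ t := by gcongr
        have e4 : 0 ≤ μ (a / l) * (t * Real.exp (-(l * t))) := by positivity
        linarith
      · have e1 := hμdec _ _ hal htl
        have e3 : t * Real.exp (-(l * t)) * μ t ≤ t * Real.exp (-(l * t)) * μ (a / l) := by gcongr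
        have e4 : 0 ≤ Real.exp 1 * (t * Real.exp (-(l * (1 / a) * t)) * μ t) := by positivity
        linarith
    have h6 : φ' l / 2 ≤ μ (a / l) * (1 / l ^ 2) := by linarith
    rw [mul_one_div, le_div_iff₀ (by positivity)] at h6
    nlinarith
  -- kernel
  set K : ℝ → ℝ := fun s => (4 * Real.pi * s) ^ (-(d:ℝ) / 2) * Real.exp (-(1 / (4 * s))) with hK
  have hKpos : ∀ s, 0 < s → 0 < K s := fun s hs => by
    simp only [hK]; positivity
  have hKi := ker_int d hd
  set J : ℝ := ∫ s in Ioi (0:ℝ), K s * (1 + 1 / s ^ 2) with hJ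
  have hJ0 : 0 ≤ J := setIntegral_nonneg measurableSet_Ioi fun s hs => by
    have hs : 0 < s := hs
    have := hKpos s hs
    positivity
  -- pointwise bound of μ
  have hμup : ∀ r s, 0 < r → 0 < s →
      μ (r ^ 2 * s) ≤ (2 / q) * (r ^ 2)⁻¹ * φ (r ^ 2)⁻¹ * (1 + 1 / s ^ 2) := by
    intro r s hr hs
    set b := (r ^ 2)⁻¹ with hb
    have hb0 : 0 < b := by positivity
    have hrb : r ^ 2 = 1 / b := by rw [hb]; simp
    have hφb := hφpos b hb0
    rw [hrb]
    rcases le_total 1 s with h | h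
    · have h1 := hμφ b hb0
      rw [div_le_iff₀ (by positivity), ← le_div_iff₀ hq0] at h1
      have h2 := hμdec (1 / b) (1 / b * s) (by positivity) (le_mul_of_one_le_right (by positivity) h)
      have h3 : 0 ≤ 2 / q * b * φ b * (1 / s ^ 2) := by positivity
      have h4 : φ b * (2 * b) / q = 2 / q * b * φ b := by ring
      linarith
    · have h1 := hμφ (b * (1 / s)) (by positivity)
      have h0 := hconc b (1 / s) hb0 (by rw [le_div_iff₀ hs]; linarith)
      have h1 := h1.trans h0
      rw [div_le_iff₀ (by positivity), ← le_div_iff₀ hq0] at h1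
      have h3 : 0 ≤ 2 / q * b * φ b := by positivity
      have h4 : 1 / s * φ b * (2 * (b * (1 / s))) / q = 2 / q * b * φ b * (1 / s ^ 2) := by
        field_simp
      have h5 : 1 / (b * (1 / s)) = 1 / b * s := by field_simp
      rw [h5] at h1
      linarith
  have hint : ∀ r, 0 < r → IntegrableOn (fun s => K s * μ (r ^ 2 * s)) (Ioi 0) := by
    intro r hr
    refine Integrable.mono' (hKi.const_mul ((2 / q) * (r ^ 2)⁻¹ * φ (r ^ 2)⁻¹)) ?_ ?_
    · refine AEStronglyMeasurable.mul ?_ (aesm (fun s => μ (r ^ 2 * s)) ?_)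
      · apply Measurable.aestronglyMeasurable
        simp only [hK]
        fun_prop
      · intro s t hs hst
        exact hμdec _ _ (by positivity) (by gcongr)
    · refine (ae_restrict_iff' measurableSet_Ioi).2 (Eventually.of_forall fun s hs => ?_)
      have hs : 0 < s := hs
      have h1 := hKpos s hs
      have h2 := hμpos (r ^ 2 * s) (by positivity)
      rw [Real.norm_eq_abs, abs_of_pos (by positivity)]
      have := mul_le_mul_of_nonneg_left (hμup r s hr hs) h1.le
      simp only [hK] at this ⊢
      linarith
  have hup : ∀ r, 0 < r → ∫ s in Ioi (0:ℝ), K s * μ (r ^ 2 * s) ≤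
      (2 / q) * (r ^ 2)⁻¹ * φ (r ^ 2)⁻¹ * J := by
    intro r hr
    rw [hJ, ← integral_const_mul]
    refine setIntegral_mono_on (hint r hr) (hKi.const_mul _) measurableSet_Ioi fun s hs => ?_
    have hs : 0 < s := hs
    have := mul_le_mul_of_nonneg_left (hμup r s hr hs) (hKpos s hs).le
    linarith
  set κ : ℝ := (4 * Real.pi * 2) ^ (-(d:ℝ) / 2) * Real.exp (-(1 / 4)) with hκ
  have hκ0 : 0 < κ := by positivity
  have hlow : ∀ r, 0 < r → κ * μ (r ^ 2 * 2) ≤ ∫ s in Ioi (0:ℝ), K s * μ (r ^ 2 * s) := by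
    intro r hr
    refine le_trans (le_of_eq ?_) (const_le _ (hint r hr) (fun t ht =>
      (mul_pos (hKpos t ht) (hμpos _ (by positivity))).le) 1 2 (κ * μ (r ^ 2 * 2)) one_pos
      (by norm_num) ?_)
    · ring
    · intro t h1 h2
      have ht : 0 < t := by linarith
      have h3 := hμdec (r ^ 2 * t) (r ^ 2 * 2) (by positivity) (by gcongr)
      have h4 : κ ≤ K t := by
        simp only [hK, hκ]
        refine mul_le_mul ?_ ?_ (Real.exp_pos _).le (by positivity)
        · apply Real.rpow_le_rpow_of_nonpos (by positivity) (by gcongr)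
          have : (0:ℝ) ≤ d := Nat.cast_nonneg d
          linarith
        · apply Real.exp_le_exp.2
          apply neg_le_neg
          apply one_div_le_one_div_of_le (by norm_num)
          linarith
      exact mul_le_mul h4 h3 (hμpos _ (by positivity)).le (hKpos t ht).le
  -- eventual statements
  have hev : ∀ᶠ l in atTop, (1 / 2 * (l ^ β * ℓ l) ≤ φ l ∧ φ l ≤ 2 * (l ^ β * ℓ l)) ∧
      β / 4 * (l * (a / 2) * φ (l * (a / 2))) ≤ μ (a / (l * (a / 2))) := by
    have h1 : Tendsto (fun l : ℝ => l * (a / 2)) atTop atTop :=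
      tendsto_id.atTop_mul_const (by positivity)
    filter_upwards [hφasym.eventually (lt_mem_nhds (by norm_num : (1/2:ℝ) < 1)),
      hφasym.eventually (gt_mem_nhds (by norm_num : (1:ℝ) < 2)), h1.eventually hμlow,
      eventually_gt_atTop 0] with l h2 h3 h4 hl
    have a1 := hℓpos l hl
    have a2 : 0 < l ^ β * ℓ l := by positivity
    rw [lt_div_iff₀ a2] at h2
    rw [div_lt_iff₀ a2] at h3
    exact ⟨⟨h2.le, h3.le⟩, h4⟩
  obtain ⟨L, hL⟩ := eventually_atTop.1 hev
  set M := max L 1 with hM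
  have hM1 : 1 ≤ M := le_max_right _ _
  set c : ℝ := κ * (β / 4 * (a / 2) * (a / 2) * (1 / 2)) with hc
  set C : ℝ := (2 / q) * J * 2 with hC
  have hc0 : 0 < c := by positivity
  refine ⟨c, max c C, 1 / M, hc0, le_max_left _ _, by positivity, fun r hr hrM => ?_⟩
  have hr1 : r * M < 1 := by rwa [lt_div_iff₀ (by linarith)] at hrM
  set b := (r ^ 2)⁻¹ with hb
  have hb0 : 0 < b := by positivity
  have hbL : L ≤ b := by
    refine (le_max_left L 1).trans ?_
    rw [hb, le_inv_comm₀ (by linarith) (by positivity), ← hM]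
    rw [← one_div, le_div_iff₀ (by linarith)]
    nlinarith [mul_pos hr (by linarith : 0 < M)]
  obtain ⟨⟨hl1, hl2⟩, hl3⟩ := hL b hbL
  have hrb : r ^ (-2:ℝ) = b := by
    rw [hb, Real.rpow_neg hr.le]; norm_cast
  have hbβ : b ^ β = r ^ (-α) := by
    rw [← hrb, ← Real.rpow_mul hr.le]
    congr 1
    rw [hβ]; ring
  have hrd : r ^ (-(d:ℝ) - α) = r ^ (-(d:ℝ)) * b ^ β := by
    rw [hbβ, ← Real.rpow_add hr]
    congr 1
  have hφb := hφpos b hb0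
  have hD : 0 < r ^ (-(d:ℝ)) := by positivity
  have hrr : r ^ 2 * b = 1 := by rw [hb]; field_simp
  have hX : 0 < b ^ β * ℓ b := mul_pos (by positivity) (hℓpos b hb0)
  have hconc' : a / 2 * φ b ≤ φ (b * (a / 2)) := by
    have := hconc (b * (a / 2)) (2 / a) (by positivity) (by rw [le_div_iff₀ ha0]; linarith)
    rw [show b * (a / 2) * (2 / a) = b by field_simp] at this
    rw [div_mul_eq_mul_div, div_le_iff₀ two_pos]
    rw [div_mul_eq_mul_div, le_div_iff₀ ha0] at this
    linarith
  rw [scale μ d r hr, hrb, hrd]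
  have hu := hup r hr
  have hlo := hlow r hr
  rw [show a / (b * (a / 2)) = r ^ 2 * 2 by rw [hb]; field_simp] at hl3
  change c * _ ≤ r ^ 2 * r ^ (-(d:ℝ)) * (∫ s in Ioi (0:ℝ), K s * μ (r ^ 2 * s)) ∧
    r ^ 2 * r ^ (-(d:ℝ)) * (∫ s in Ioi (0:ℝ), K s * μ (r ^ 2 * s)) ≤ _
  set I := ∫ s in Ioi (0:ℝ), K s * μ (r ^ 2 * s) with hI
  constructor
  · have h1 : κ * (β / 4 * (b * (a / 2) * (a / 2 * (1 / 2 * (b ^ β * ℓ b))))) ≤ I := by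
      refine le_trans ?_ hlo
      refine mul_le_mul_of_nonneg_left (le_trans ?_ hl3) hκ0.le
      have : a / 2 * (1 / 2 * (b ^ β * ℓ b)) ≤ φ (b * (a / 2)) :=
        le_trans (by gcongr) hconc'
      gcongr
    have h2 := mul_le_mul_of_nonneg_left h1 (by positivity : 0 ≤ r ^ 2 * r ^ (-(d:ℝ)))
    refine le_trans (le_of_eq ?_) h2
    have : r ^ 2 * r ^ (-(d:ℝ)) * (κ * (β / 4 * (b * (a / 2) * (a / 2 * (1 / 2 * (b ^ β * ℓ b))))))
      = (r ^ 2 * b) * (c * (r ^ (-(d:ℝ)) * b ^ β * ℓ b)) := by rw [hc]; ring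
    rw [this, hrr, one_mul]
  · have h1 : I ≤ (2 / q) * b * (2 * (b ^ β * ℓ b)) * J := hu.trans (by gcongr)
    have h2 := mul_le_mul_of_nonneg_left h1 (by positivity : 0 ≤ r ^ 2 * r ^ (-(d:ℝ)))
    refine h2.trans ?_
    have : r ^ 2 * r ^ (-(d:ℝ)) * ((2 / q) * b * (2 * (b ^ β * ℓ b)) * J)
      = (r ^ 2 * b) * (C * (r ^ (-(d:ℝ)) * b ^ β * ℓ b)) := by rw [hC]; ring
    rw [this, hrr, one_mul]
    refine mul_le_mul_of_nonneg_right (le_max_right _ _) ?_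
    rw [mul_assoc]
    positivity
end

section
/- Let d ≥ 3 be an integer and define j(r) = ∫_0^∞ (4πt)^{−d/2} e^{−r²/(4t)} t^{−1} e^{−t} dt for r > 0 (the Lévy density of the variance gamma process, i.e. the subordinate Brownian motion for the gamma subordinator, whose Lévy density is μ(t) = e^{−t}/t and whose Laplace exponent is φ(λ) = log(1+λ)). Then j(r) ≍ r^{−d} as r → 0+; i.e. there are constants 0 < c ≤ C and r₀ > 0 with c r^{−d} ≤ j(r) ≤ C r^{−d} for all r ∈ (0, r₀). -/
open MeasureTheory Set Filter Topology

lemma vg_G_integrable (d : ℕ) (hd : 3 ≤ d) :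
    IntegrableOn (fun u : ℝ => (4 * Real.pi * u) ^ (-(d:ℝ) / 2) * Real.exp (-(1 / (4 * u))) / u)
      (Ioi 0) := by
  rw [← integrableOn_Ioi_comp_rpow_iff' _ (show (-1:ℝ) ≠ 0 by norm_num)]
  have hd' : (3:ℝ) ≤ d := by exact_mod_cast hd
  have h := (integrableOn_rpow_mul_exp_neg_mul_rpow (p := 1) (s := (d:ℝ) / 2 - 1) (b := 1 / 4)
    (by linarith) one_pos (by norm_num)).const_mul ((4 * Real.pi) ^ (-(d:ℝ) / 2))
  refine IntegrableOn.congr_fun h (fun x hx => ?_) measurableSet_Ioi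
  have hx : 0 < x := hx
  have hpi := Real.pi_pos
  have e1 : (4 * Real.pi * x ^ (-1:ℝ)) ^ (-(d:ℝ) / 2)
      = (4 * Real.pi) ^ (-(d:ℝ) / 2) * x ^ ((d:ℝ) / 2) := by
    rw [Real.mul_rpow (by positivity) (by positivity), ← Real.rpow_mul hx.le]
    congr 2; ring
  have e2 : x ^ ((d:ℝ) / 2 - 1) = x ^ ((d:ℝ) / 2) / x := by
    rw [Real.rpow_sub hx, Real.rpow_one]
  have e3 : x ^ ((-1:ℝ) - 1) = (x ^ 2)⁻¹ := by
    rw [show (-1:ℝ) - 1 = -((2:ℕ):ℝ) by norm_num, Real.rpow_neg hx.le, Real.rpow_natCast]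
  have e4 : -(1 / (4 * x⁻¹)) = -(1 / 4) * x := by field_simp
  simp only [smul_eq_mul]
  rw [e1, e2, e3, Real.rpow_one, Real.rpow_neg_one, e4]
  field_simp

lemma vg_scale (d : ℕ) (r : ℝ) (hr : 0 < r) :
    (∫ t in Ioi (0:ℝ),
          (4 * Real.pi * t) ^ (-(d:ℝ) / 2) * Real.exp (-(r ^ 2 / (4 * t))) *
            (Real.exp (-t) / t)) =
    (∫ u in Ioi (0:ℝ), ((4 * Real.pi * u) ^ (-(d:ℝ) / 2) * Real.exp (-(1 / (4 * u))) / u)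
        * Real.exp (-(r ^ 2 * u))) * r ^ (-(d:ℝ)) := by
  have hr2 : 0 < r ^ 2 := by positivity
  have h := integral_comp_mul_left_Ioi (fun t : ℝ =>
    (4 * Real.pi * t) ^ (-(d:ℝ) / 2) * Real.exp (-(r ^ 2 / (4 * t))) *
            (Real.exp (-t) / t)) 0 hr2
  rw [mul_zero, smul_eq_mul] at h
  have h2 : (∫ t in Ioi (0:ℝ),
          (4 * Real.pi * t) ^ (-(d:ℝ) / 2) * Real.exp (-(r ^ 2 / (4 * t))) *
            (Real.exp (-t) / t)) = r ^ 2 * ∫ u in Ioi (0:ℝ),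
          (4 * Real.pi * (r ^ 2 * u)) ^ (-(d:ℝ) / 2) * Real.exp (-(r ^ 2 / (4 * (r ^ 2 * u)))) *
            (Real.exp (-(r ^ 2 * u)) / (r ^ 2 * u)) := by
    rw [h, mul_inv_cancel_left₀ hr2.ne']
  rw [h2, ← integral_const_mul, ← integral_mul_const]
  refine setIntegral_congr_fun measurableSet_Ioi (fun u hu => ?_)
  have hu : 0 < u := hu
  have hpi := Real.pi_pos
  have e1 : (4 * Real.pi * (r ^ 2 * u)) ^ (-(d:ℝ) / 2)
      = (4 * Real.pi * u) ^ (-(d:ℝ) / 2) * r ^ (-(d:ℝ)) := by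
    rw [show 4 * Real.pi * (r ^ 2 * u) = (4 * Real.pi * u) * r ^ 2 by ring,
      Real.mul_rpow (by positivity) (by positivity), ← Real.rpow_natCast r 2,
      ← Real.rpow_mul hr.le]
    congr 2; push_cast; ring
  have e4 : r ^ 2 / (4 * (r ^ 2 * u)) = 1 / (4 * u) := by field_simp
  rw [e1, e4]
  field_simp

/-- The Lévy density of the variance gamma process satisfies `j(r) ≍ r^{-d}` as `r → 0+`. -/
theorem variance_gamma_jump_asymp
    (d : ℕ) (hd : 3 ≤ d) :
    ∃ c C r₀ : ℝ, 0 < c ∧ c ≤ C ∧ 0 < r₀ ∧ ∀ r, 0 < r → r < r₀ →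
      c * r ^ (-(d:ℝ)) ≤
        (∫ t in Ioi (0:ℝ),
          (4 * Real.pi * t) ^ (-(d:ℝ) / 2) * Real.exp (-(r ^ 2 / (4 * t))) *
            (Real.exp (-t) / t)) ∧
      (∫ t in Ioi (0:ℝ),
          (4 * Real.pi * t) ^ (-(d:ℝ) / 2) * Real.exp (-(r ^ 2 / (4 * t))) *
            (Real.exp (-t) / t)) ≤ C * r ^ (-(d:ℝ)) := by
  have hG := vg_G_integrable d hd
  have hpi := Real.pi_pos
  set G : ℝ → ℝ := fun u : ℝ =>
    (4 * Real.pi * u) ^ (-(d:ℝ) / 2) * Real.exp (-(1 / (4 * u))) / u with hGdef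
  have hGpos : ∀ u ∈ Ioi (0:ℝ), 0 < G u := by
    intro u hu
    have hu : 0 < u := hu
    simp only [hGdef]; positivity
  have hIntG : ∀ a : ℝ, 0 ≤ a → IntegrableOn (fun u => G u * Real.exp (-(a * u))) (Ioi 0) := by
    intro a ha
    refine Integrable.mono' hG
      (hG.aestronglyMeasurable.mul (by fun_prop)) ?_
    filter_upwards [ae_restrict_mem measurableSet_Ioi] with u hu
    have h0 := hGpos u hu
    have hu : 0 < u := hu
    rw [Real.norm_of_nonneg (by positivity)]
    exact mul_le_of_le_one_right h0.le (Real.exp_le_one_iff.2 (by nlinarith [mul_nonneg ha hu.le]))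
  have hmono : ∀ a b : ℝ, 0 ≤ a → a ≤ b →
      ∫ u in Ioi (0:ℝ), G u * Real.exp (-(b * u)) ≤ ∫ u in Ioi (0:ℝ), G u * Real.exp (-(a * u)) := by
    intro a b ha hab
    refine setIntegral_mono_on (hIntG b (ha.trans hab)) (hIntG a ha) measurableSet_Ioi
      (fun u hu => ?_)
    have h0 := hGpos u hu
    have hu : 0 < u := hu
    gcongr
  refine ⟨∫ u in Ioi (0:ℝ), G u * Real.exp (-(1 * u)), ∫ u in Ioi (0:ℝ), G u * Real.exp (-(0 * u)),
    1, ?_, hmono 0 1 le_rfl zero_le_one, one_pos, ?_⟩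
  · rw [setIntegral_pos_iff_support_of_nonneg_ae _ (hIntG 1 zero_le_one)]
    · have : Ioi (0:ℝ) ⊆ Function.support (fun u => G u * Real.exp (-(1 * u))) ∩ Ioi 0 :=
        fun u hu => ⟨(mul_pos (hGpos u hu) (Real.exp_pos _)).ne', hu⟩
      refine lt_of_lt_of_le ?_ (measure_mono this)
      simp
    · filter_upwards [ae_restrict_mem measurableSet_Ioi] with u hu
      exact (mul_pos (hGpos u hu) (Real.exp_pos _)).le
  · intro r hr hr1
    rw [vg_scale d r hr]
    have hp : 0 ≤ r ^ (-(d:ℝ)) := by positivity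
    exact ⟨mul_le_mul_of_nonneg_right (hmono (r ^ 2) 1 (by positivity) (by nlinarith)) hp,
      mul_le_mul_of_nonneg_right (hmono 0 (r ^ 2) le_rfl (by positivity)) hp⟩
end

section
/- Let β ∈ (0,2], let φ(λ) = log(1 + λ^{β/2}), and let u : (0,∞) → (0,∞) be a decreasing function with ∫_0^∞ e^{−λt} u(t) dt = 1/φ(λ) for all λ > 0. For an integer d ≥ 3, define g(r) = ∫_0^∞ (4πt)^{−d/2} e^{−r²/(4t)} u(t) dt. Then g(r) ≍ r^{−d} (log(1/r))^{−2} as r → 0+. -/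
open MeasureTheory Set Filter Topology

lemma gs_D_bounds (a : ℝ) (ha : 0 < a) : ∃ c C : ℝ, 0 < c ∧ 0 < C ∧ ∀ l : ℝ, 2 ≤ l →
    c / Real.log l ^ 2 ≤ 1 / Real.log (1 + l ^ a) - 1 / Real.log (1 + (2 * l) ^ a) ∧
    1 / Real.log (1 + l ^ a) - 1 / Real.log (1 + (2 * l) ^ a) ≤ C / Real.log l ^ 2 := by
  have h2a : 1 < (2:ℝ) ^ a := Real.one_lt_rpow (by norm_num) ha
  have hk : 0 < Real.log ((1 + 2 ^ a) / 2) := Real.log_pos (by linarith)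
  have hK : 0 < Real.log (2 ^ a) := Real.log_pos h2a
  refine ⟨Real.log ((1 + 2 ^ a) / 2) / (1 + 2 * a) ^ 2, Real.log (2 ^ a) / a ^ 2,
    by positivity, by positivity, ?_⟩
  intro l hl
  have hlog2 : 0 < Real.log 2 := Real.log_pos (by norm_num)
  have hL : Real.log 2 ≤ Real.log l := Real.log_le_log (by norm_num) hl
  have hL0 : 0 < Real.log l := by linarith
  have hla : 1 ≤ l ^ a := Real.one_le_rpow (by linarith) ha.le
  have hmul : (2 * l) ^ a = 2 ^ a * l ^ a := Real.mul_rpow (by norm_num) (by linarith)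
  rw [hmul]
  set x := l ^ a with hx
  set y := (2:ℝ) ^ a with hy
  have hxl : Real.log x = a * Real.log l := Real.log_rpow (by linarith) a
  have hyl : Real.log y = a * Real.log 2 := Real.log_rpow (by norm_num) a
  have hxy : x ≤ y * x := by nlinarith
  have h1 : a * Real.log l ≤ Real.log (1 + x) := by
    rw [← hxl]; exact Real.log_le_log (by linarith) (by linarith)
  have h2 : Real.log (1 + x) ≤ Real.log (1 + y * x) :=
    Real.log_le_log (by linarith) (by linarith)
  have h3 : Real.log (1 + y * x) ≤ (1 + 2 * a) * Real.log l := by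
    have : Real.log (1 + y * x) ≤ Real.log (2 * (y * x)) :=
      Real.log_le_log (by linarith) (by linarith)
    rw [Real.log_mul (by norm_num) (by positivity), Real.log_mul (by positivity) (by positivity),
      hxl, hyl] at this
    nlinarith
  have hP : 0 < a * Real.log l := by positivity
  have hn : Real.log (1 + y * x) - Real.log (1 + x) = Real.log ((1 + y * x) / (1 + x)) := by
    rw [Real.log_div (by positivity) (by positivity)]
  have hn1 : Real.log ((1 + y) / 2) ≤ Real.log (1 + y * x) - Real.log (1 + x) := by
    rw [hn]
    apply Real.log_le_log (by positivity)
    rw [div_le_div_iff₀ (by norm_num) (by positivity)]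
    nlinarith
  have hn2 : Real.log (1 + y * x) - Real.log (1 + x) ≤ Real.log y := by
    rw [hn]
    apply Real.log_le_log (by positivity)
    rw [div_le_iff₀ (by positivity)]
    nlinarith
  have hA : 0 < Real.log (1 + x) := by linarith
  have hB : 0 < Real.log (1 + y * x) := by linarith
  have heq : 1 / Real.log (1 + x) - 1 / Real.log (1 + y * x)
      = (Real.log (1 + y * x) - Real.log (1 + x)) / (Real.log (1 + x) * Real.log (1 + y * x)) := by
    rw [div_sub_div _ _ hA.ne' hB.ne', one_mul, mul_one]
  rw [heq, div_div, div_div, ← mul_pow, ← mul_pow]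
  constructor
  · apply div_le_div₀ (by linarith) hn1 (by positivity)
    rw [sq]
    exact mul_le_mul (by linarith) h3 hB.le (by positivity)
  · apply div_le_div₀ (by positivity) hn2 (by positivity)
    rw [sq]
    exact mul_le_mul h1 (by linarith) hP.le hA.le

lemma gs_integrable (a : ℝ) (u : ℝ → ℝ)
    (hu : ∀ l, 0 < l → ∫ t in Ioi (0:ℝ), Real.exp (-(l * t)) * u t =
      1 / Real.log (1 + l ^ a)) (l : ℝ) (hl : 0 < l) :
    IntegrableOn (fun t => Real.exp (-(l * t)) * u t) (Ioi 0) := by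
  by_contra h
  have h1 := hu l hl
  rw [integral_undef h] at h1
  have : 0 < l ^ a := Real.rpow_pos_of_pos hl a
  have h2 : 0 < Real.log (1 + l ^ a) := Real.log_pos (by linarith)
  have : 0 < 1 / Real.log (1 + l ^ a) := by positivity
  linarith

/-- difference identity -/
lemma gs_diff (a : ℝ) (u : ℝ → ℝ)
    (hu : ∀ l, 0 < l → ∫ t in Ioi (0:ℝ), Real.exp (-(l * t)) * u t =
      1 / Real.log (1 + l ^ a)) (l : ℝ) (hl : 0 < l) :
    IntegrableOn (fun t => (Real.exp (-(l * t)) - Real.exp (-(2 * l * t))) * u t) (Ioi 0) ∧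
    ∫ t in Ioi (0:ℝ), (Real.exp (-(l * t)) - Real.exp (-(2 * l * t))) * u t
      = 1 / Real.log (1 + l ^ a) - 1 / Real.log (1 + (2 * l) ^ a) := by
  have h1 := gs_integrable a u hu l hl
  have h2 := gs_integrable a u hu (2 * l) (by linarith)
  simp only [sub_mul]
  refine ⟨h1.sub h2, ?_⟩
  rw [integral_sub h1 h2, hu l hl, hu (2 * l) (by linarith)]

lemma gs_u_upper (a : ℝ) (ha : 0 < a) (u : ℝ → ℝ)
    (hupos : ∀ t, 0 < t → 0 < u t)
    (hudec : ∀ s t, 0 < s → s ≤ t → u t ≤ u s)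
    (hu : ∀ l, 0 < l → ∫ t in Ioi (0:ℝ), Real.exp (-(l * t)) * u t =
      1 / Real.log (1 + l ^ a)) :
    ∃ C : ℝ, 0 < C ∧ ∀ t, 0 < t → t ≤ 1 / 2 → u t ≤ C / (t * Real.log (1 / t) ^ 2) := by
  obtain ⟨_, C, _, hC, hD⟩ := gs_D_bounds a ha
  set m : ℝ := Real.exp (-1) - Real.exp (-1) * Real.exp (-(1/2)) with hm
  have hm0 : 0 < m := by
    have : Real.exp (-(1/2)) < 1 := (Real.exp_lt_exp.2 (show -(1/2:ℝ) < 0 by norm_num)).trans_eq Real.exp_zero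
    have := Real.exp_pos (-1)
    rw [hm]; nlinarith
  refine ⟨2 * C / m, by positivity, ?_⟩
  intro t ht ht2
  have hl : 2 ≤ 1 / t := by rw [le_div_iff₀ ht]; linarith
  have hl0 : 0 < 1 / t := by positivity
  obtain ⟨hi, he⟩ := gs_diff a u hu (1 / t) hl0
  have hb := (hD (1 / t) hl).2
  rw [← he] at hb
  have hlow : m * u t * (t / 2) ≤
      ∫ s in Ioi (0:ℝ), (Real.exp (-(1 / t * s)) - Real.exp (-(2 * (1 / t) * s))) * u s := by
    have hsub : Ioc (t / 2) t ⊆ Ioi (0:ℝ) := fun s hs => lt_trans (by positivity) hs.1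
    calc m * u t * (t / 2) = ∫ s in Ioc (t/2) t, m * u t := by
          rw [setIntegral_const, measureReal_def, Real.volume_Ioc, ENNReal.toReal_ofReal (by linarith)]
          simp; ring
      _ ≤ ∫ s in Ioc (t/2) t, (Real.exp (-(1 / t * s)) - Real.exp (-(2 * (1 / t) * s))) * u s := by
          apply setIntegral_mono_on (integrableOn_const (by simp)) (hi.mono_set hsub) measurableSet_Ioc
          intro s hs
          have hs0 : 0 < s := hsub hs
          apply mul_le_mul _ (hudec s t hs0 hs.2) (hupos t ht).le
          · have : Real.exp (-(2 * (1 / t) * s)) = Real.exp (-(1/t*s)) * Real.exp (-(1/t*s)) := by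
              rw [← Real.exp_add]; ring_nf
            rw [this, sub_nonneg]
            have : Real.exp (-(1/t*s)) ≤ 1 := Real.exp_le_one_iff.2 (by
              have : 0 < 1 / t * s := by positivity
              linarith)
            have := Real.exp_pos (-(1/t*s))
            nlinarith
          · have e : Real.exp (-(2 * (1 / t) * s)) = Real.exp (-(1/t*s)) * Real.exp (-(1/t*s)) := by
              rw [← Real.exp_add]; ring_nf
            have hx1 : 1 / t * s ≤ 1 := by
              rw [one_div_mul_eq_div, div_le_one ht]; exact hs.2
            have hx2 : 1 / 2 ≤ 1 / t * s := by
              rw [one_div_mul_eq_div, le_div_iff₀ ht]; linarith [hs.1]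
            have e1 : Real.exp (-1) ≤ Real.exp (-(1/t*s)) := Real.exp_le_exp.2 (by linarith)
            have e2 : Real.exp (-(1/t*s)) ≤ Real.exp (-(1/2)) := Real.exp_le_exp.2 (by linarith)
            have e3 : Real.exp (-(1/2)) < 1 := (Real.exp_lt_exp.2 (show -(1/2:ℝ) < 0 by norm_num)).trans_eq Real.exp_zero
            have := Real.exp_pos (-1)
            rw [e, hm]
            have : Real.exp (-1) * (1 - Real.exp (-(1/2))) ≤
              Real.exp (-(1/t*s)) * (1 - Real.exp (-(1/t*s))) :=
              mul_le_mul e1 (by linarith) (by linarith) (by linarith)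
            linarith
      _ ≤ _ := by
          apply setIntegral_mono_set hi _ (LE.le.eventuallyLE hsub)
          filter_upwards [ae_restrict_mem measurableSet_Ioi] with s hs
          have hs : 0 < s := hs
          apply mul_nonneg _ (hupos s hs).le
          rw [sub_nonneg]
          apply Real.exp_le_exp.2
          have : 0 < 1 / t * s := by positivity
          linarith
  have h := hlow.trans hb
  have hlog : 0 < Real.log (1 / t) := Real.log_pos (by linarith)
  rw [le_div_iff₀ (by positivity)] at h ⊢
  rw [le_div_iff₀ hm0]
  nlinarith

lemma gs_h_int (t : ℝ) (ht : 0 < t) :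
    IntegrableOn (fun s => Real.exp (-(1 / t * s)) - Real.exp (-(2 * (1 / t) * s))) (Ioi 0) ∧
    ∫ s in Ioi (0:ℝ), (Real.exp (-(1 / t * s)) - Real.exp (-(2 * (1 / t) * s))) = t / 2 := by
  have hl : 0 < 1 / t := by positivity
  have i1 : IntegrableOn (fun s => Real.exp (-(1 / t * s))) (Ioi 0) := by
    simpa using exp_neg_integrableOn_Ioi 0 hl
  have i2 : IntegrableOn (fun s => Real.exp (-(2 * (1 / t) * s))) (Ioi 0) := by
    simpa using exp_neg_integrableOn_Ioi 0 (show 0 < 2 * (1 / t) by positivity)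
  refine ⟨i1.sub i2, ?_⟩
  rw [integral_sub i1 i2]
  have e1 := integral_exp_mul_Ioi (a := -(1/t)) (by linarith) 0
  have e2 := integral_exp_mul_Ioi (a := -(2*(1/t))) (by linarith) 0
  simp only [neg_mul] at e1 e2
  rw [e1, e2]
  simp
  field_simp
  norm_num

lemma gs_u_lower (a : ℝ) (ha : 0 < a) (u : ℝ → ℝ)
    (hupos : ∀ t, 0 < t → 0 < u t)
    (hudec : ∀ s t, 0 < s → s ≤ t → u t ≤ u s)
    (hu : ∀ l, 0 < l → ∫ t in Ioi (0:ℝ), Real.exp (-(l * t)) * u t =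
      1 / Real.log (1 + l ^ a)) :
    ∃ c t₀ : ℝ, 0 < c ∧ 0 < t₀ ∧ t₀ ≤ 1 / 2 ∧
      ∀ t, 0 < t → t ≤ t₀ → c / (t * Real.log (1 / t) ^ 2) ≤ u t := by
  obtain ⟨c, _, hc, _, hD⟩ := gs_D_bounds a ha
  obtain ⟨C, hC, hU⟩ := gs_u_upper a ha u hupos hudec hu
  set ε : ℝ := min 1 (c / (2 * C)) with hε
  have hε0 : 0 < ε := lt_min one_pos (by positivity)
  have hε1 : ε ≤ 1 := min_le_left _ _
  have hε2 : C * ε ≤ c / 2 := by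
    have : ε ≤ c / (2 * C) := min_le_right _ _
    calc C * ε ≤ C * (c / (2 * C)) := by gcongr
      _ = c / 2 := by field_simp
  refine ⟨c * ε, ε / 2, by positivity, by positivity, by linarith, ?_⟩
  intro s hs hs2
  obtain ⟨t, rfl⟩ : ∃ t, s = ε * t := ⟨s / ε, by field_simp⟩
  have ht : 0 < t := pos_of_mul_pos_right hs hε0.le
  have ht2 : t ≤ 1 / 2 := by
    have : ε * t ≤ ε * (1/2) := by linarith
    exact le_of_mul_le_mul_left this hε0
  have hεt : ε * t ≤ t := by nlinarith
  have hl : 2 ≤ 1 / t := by rw [le_div_iff₀ ht]; linarith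
  have hl0 : 0 < 1 / t := by positivity
  have hlog : 0 < Real.log (1 / t) := Real.log_pos (by linarith)
  obtain ⟨hi, he⟩ := gs_diff a u hu (1 / t) hl0
  obtain ⟨hi', he'⟩ := gs_h_int t ht
  have hb := (hD (1 / t) hl).1
  rw [← he] at hb
  have hnn : ∀ s, 0 < s → 0 ≤ Real.exp (-(1 / t * s)) - Real.exp (-(2 * (1 / t) * s)) := by
    intro s hs
    rw [sub_nonneg]
    apply Real.exp_le_exp.2
    have : 0 < 1 / t * s := by positivity
    linarith
  have hsub1 : Ioc 0 (ε * t) ⊆ Ioi (0:ℝ) := fun s hs => hs.1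
  have hsub2 : Ioi (ε * t) ⊆ Ioi (0:ℝ) := Ioi_subset_Ioi hs.le
  have hsplit : Ioi (0:ℝ) = Ioc 0 (ε * t) ∪ Ioi (ε * t) := (Ioc_union_Ioi_eq_Ioi hs.le).symm
  have hsum : ∫ s in Ioi (0:ℝ), (Real.exp (-(1 / t * s)) - Real.exp (-(2 * (1 / t) * s))) * u s
     = (∫ s in Ioc 0 (ε * t), (Real.exp (-(1 / t * s)) - Real.exp (-(2 * (1 / t) * s))) * u s) +
      ∫ s in Ioi (ε * t), (Real.exp (-(1 / t * s)) - Real.exp (-(2 * (1 / t) * s))) * u s := by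
    rw [← setIntegral_union (Ioc_disjoint_Ioi le_rfl) measurableSet_Ioi (hi.mono_set hsub1)
      (hi.mono_set hsub2), ← hsplit]
  have hp1 : (∫ s in Ioc 0 (ε * t), (Real.exp (-(1 / t * s)) - Real.exp (-(2 * (1 / t) * s))) * u s)
      ≤ C * ε / Real.log (1 / t) ^ 2 := by
    calc _ ≤ ∫ s in Ioc 0 (ε * t), C / (t * Real.log (1 / t) ^ 2) := by
          apply setIntegral_mono_on (hi.mono_set hsub1) (by simp) measurableSet_Ioc
          intro s hs'
          have hs0 : 0 < s := hs'.1
          have hst : s ≤ t := hs'.2.trans hεt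
          have b1 : Real.exp (-(1 / t * s)) - Real.exp (-(2 * (1 / t) * s)) ≤ s / t := by
            have e : Real.exp (-(2 * (1 / t) * s)) = Real.exp (-(1/t*s)) * Real.exp (-(1/t*s)) := by
              rw [← Real.exp_add]; ring_nf
            have h1 := Real.add_one_le_exp (-(1/t*s))
            have h2 : Real.exp (-(1/t*s)) ≤ 1 := Real.exp_le_one_iff.2 (by
              have : 0 < 1 / t * s := by positivity
              linarith)
            have h3 := Real.exp_pos (-(1/t*s))
            rw [e, show s / t = 1 / t * s by ring]
            nlinarith
          have b2 : u s ≤ C / (s * Real.log (1 / t) ^ 2) := by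
            refine (hU s hs0 (by linarith)).trans ?_
            gcongr
          calc _ ≤ s / t * (C / (s * Real.log (1 / t) ^ 2)) :=
                mul_le_mul b1 b2 (hupos s hs0).le (by positivity)
            _ = _ := by field_simp
      _ = _ := by
          rw [setIntegral_const, measureReal_def, Real.volume_Ioc, ENNReal.toReal_ofReal (by linarith)]
          simp; field_simp
  have hp2 : (∫ s in Ioi (ε * t), (Real.exp (-(1 / t * s)) - Real.exp (-(2 * (1 / t) * s))) * u s)
      ≤ t / 2 * u (ε * t) := by
    calc _ ≤ ∫ s in Ioi (ε * t),
          (Real.exp (-(1 / t * s)) - Real.exp (-(2 * (1 / t) * s))) * u (ε * t) := by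
          apply setIntegral_mono_on (hi.mono_set hsub2) ((hi'.mono_set hsub2).mul_const _)
            measurableSet_Ioi
          intro s hs'
          exact mul_le_mul_of_nonneg_left (hudec _ _ hs (le_of_lt hs')) (hnn s (hsub2 hs'))
      _ = (∫ s in Ioi (ε * t),
          (Real.exp (-(1 / t * s)) - Real.exp (-(2 * (1 / t) * s)))) * u (ε * t) :=
          integral_mul_const _ _
      _ ≤ _ := by
          apply mul_le_mul_of_nonneg_right _ (hupos _ hs).le
          rw [← he']
          apply setIntegral_mono_set hi' _ (LE.le.eventuallyLE hsub2)
          filter_upwards [ae_restrict_mem measurableSet_Ioi] with s hs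
          exact hnn s hs
  have hfin : c / Real.log (1 / t) ^ 2 ≤ (c / 2) / Real.log (1 / t) ^ 2 + t / 2 * u (ε * t) := by
    have : C * ε / Real.log (1 / t) ^ 2 ≤ (c / 2) / Real.log (1 / t) ^ 2 := by gcongr
    linarith
  have hfin2 : c / (t * Real.log (1 / t) ^ 2) ≤ u (ε * t) := by
    have e : c / Real.log (1 / t) ^ 2 - (c / 2) / Real.log (1 / t) ^ 2
      = t / 2 * (c / (t * Real.log (1 / t) ^ 2)) := by field_simp; ring
    have : t / 2 * (c / (t * Real.log (1 / t) ^ 2)) ≤ t / 2 * u (ε * t) := by linarith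
    exact le_of_mul_le_mul_left this (by positivity)
  refine le_trans ?_ hfin2
  have : c * ε / (ε * t * Real.log (1 / (ε * t)) ^ 2) = c / (t * Real.log (1 / (ε * t)) ^ 2) := by
    rw [mul_comm c ε, mul_assoc ε t, mul_div_mul_left _ _ hε0.ne']
  rw [this]
  gcongr

lemma gs_exp_bound (d : ℕ) (t R : ℝ) (ht : 0 < t) (htR : t ≤ R) :
    t ^ (-(d:ℝ) / 2) * Real.exp (-(R / (4 * t))) * t⁻¹
      ≤ 4 ^ (d + 1) * (d + 1).factorial * (R ^ (-(d:ℝ) / 2) * R⁻¹) := by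
  have hR : 0 < R := ht.trans_le htR
  set y := R / t with hy
  have hy1 : 1 ≤ y := by rw [hy, le_div_iff₀ ht]; linarith
  have hy0 : 0 < y := by linarith
  have hty : t = R * y⁻¹ := by rw [hy]; field_simp
  have e1 : t ^ (-(d:ℝ) / 2) = R ^ (-(d:ℝ) / 2) * y ^ ((d:ℝ) / 2) := by
    rw [hty, Real.mul_rpow hR.le (by positivity), Real.inv_rpow hy0.le, ← Real.rpow_neg hy0.le]
    congr 2; ring
  have e2 : t⁻¹ = R⁻¹ * y := by rw [hty]; field_simp
  have e3 : R / (4 * t) = y / 4 := by rw [hy]; field_simp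
  rw [e1, e2, e3]
  have h1 : y ^ ((d:ℝ) / 2) ≤ y ^ d := by
    rw [← Real.rpow_natCast y d]
    apply Real.rpow_le_rpow_of_exponent_le hy1
    have : (0:ℝ) ≤ d := by positivity
    linarith
  have h2 : (y / 4) ^ (d + 1) / (d + 1).factorial ≤ Real.exp (y / 4) :=
    Real.pow_div_factorial_le_exp _ (by positivity) _
  have hf : (0:ℝ) < (d + 1).factorial := by exact_mod_cast Nat.factorial_pos _
  rw [div_le_iff₀ hf, div_pow, div_le_iff₀ (by positivity)] at h2
  have h3 : y ^ ((d:ℝ) / 2) * Real.exp (-(y / 4)) * y ≤ 4 ^ (d + 1) * (d + 1).factorial := by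
    rw [Real.exp_neg, ← div_eq_mul_inv, div_mul_eq_mul_div, div_le_iff₀ (Real.exp_pos _)]
    calc y ^ ((d:ℝ) / 2) * y ≤ y ^ d * y := by gcongr
      _ = y ^ (d + 1) := by ring
      _ ≤ _ := h2
      _ = _ := by ring
  have hRp : 0 < R ^ (-(d:ℝ) / 2) * R⁻¹ := by positivity
  calc _ = (y ^ ((d:ℝ) / 2) * Real.exp (-(y / 4)) * y) * (R ^ (-(d:ℝ) / 2) * R⁻¹) := by ring
    _ ≤ _ := mul_le_mul_of_nonneg_right h3 hRp.le

lemma gs_g_bound (u : ℝ → ℝ)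
    (hupos : ∀ t, 0 < t → 0 < u t)
    (hudec : ∀ s t, 0 < s → s ≤ t → u t ≤ u s)
    (d : ℕ) (hd : 3 ≤ d) (R M : ℝ) (hR : 0 < R) (hM : ∀ t, 0 < t → t ≤ R → u t ≤ M * t⁻¹) :
    IntegrableOn (fun t => (4 * Real.pi * t) ^ (-(d:ℝ) / 2) * Real.exp (-(R / (4 * t))) * u t)
      (Ioi 0) ∧
    ∫ t in Ioi (0:ℝ), (4 * Real.pi * t) ^ (-(d:ℝ) / 2) * Real.exp (-(R / (4 * t))) * u t ≤
      (4 ^ (d + 1) * (d + 1).factorial + 2) * M * R ^ (-(d:ℝ) / 2) := by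
  set f := fun t => (4 * Real.pi * t) ^ (-(d:ℝ) / 2) * Real.exp (-(R / (4 * t))) * u t with hf
  have hd' : (3:ℝ) ≤ d := by exact_mod_cast hd
  have hM0 : 0 < M := by
    have h1 := hM R hR le_rfl
    have h2 := hupos R hR
    exact pos_of_mul_pos_left (h2.trans_le h1) (by positivity)
  have hpt : ∀ t, 0 < t → (4 * Real.pi * t) ^ (-(d:ℝ) / 2) ≤ t ^ (-(d:ℝ) / 2) := by
    intro t ht
    apply Real.rpow_le_rpow_of_nonpos ht _ (by linarith)
    have := Real.pi_gt_three
    nlinarith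
  have hfnn : ∀ t, 0 < t → 0 ≤ f t := fun t ht => by
    have := hupos t ht
    have := Real.pi_pos
    simp only [hf]; positivity
  have hmeas : AEStronglyMeasurable f (volume.restrict (Ioi 0)) := by
    apply AEMeasurable.aestronglyMeasurable
    apply AEMeasurable.mul
    · apply Measurable.aemeasurable; fun_prop
    · exact aemeasurable_restrict_of_antitoneOn measurableSet_Ioi
        (fun s hs t _ hst => hudec s t hs hst)
  set K : ℝ := 4 ^ (d + 1) * (d + 1).factorial with hK
  have hb1 : ∀ t ∈ Ioc 0 R, f t ≤ K * (R ^ (-(d:ℝ) / 2) * R⁻¹) * M := by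
    intro t ht
    have ht0 : 0 < t := ht.1
    calc f t ≤ t ^ (-(d:ℝ) / 2) * Real.exp (-(R / (4 * t))) * (M * t⁻¹) := by
          apply mul_le_mul _ (hM t ht0 ht.2) (hupos t ht0).le (by positivity)
          exact mul_le_mul_of_nonneg_right (hpt t ht0) (Real.exp_pos _).le
      _ = (t ^ (-(d:ℝ) / 2) * Real.exp (-(R / (4 * t))) * t⁻¹) * M := by ring
      _ ≤ _ := mul_le_mul_of_nonneg_right (gs_exp_bound d t R ht0 ht.2) hM0.le
  have hb2 : ∀ t ∈ Ioi R, f t ≤ t ^ (-(d:ℝ) / 2) * (M * R⁻¹) := by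
    intro t ht
    have ht0 : 0 < t := hR.trans ht
    apply mul_le_mul _ ((hudec R t hR (le_of_lt ht)).trans (hM R hR le_rfl)) (hupos t ht0).le
      (by positivity)
    have : Real.exp (-(R / (4 * t))) ≤ 1 := Real.exp_le_one_iff.2 (by
      have : 0 < R / (4 * t) := by positivity
      linarith)
    calc _ ≤ t ^ (-(d:ℝ) / 2) * 1 :=
          mul_le_mul (hpt t ht0) this (Real.exp_pos _).le (by positivity)
      _ = _ := mul_one _
  have hsub1 : Ioc 0 R ⊆ Ioi (0:ℝ) := fun s hs => hs.1
  have hsub2 : Ioi R ⊆ Ioi (0:ℝ) := Ioi_subset_Ioi hR.le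
  have hsplit : Ioi (0:ℝ) = Ioc 0 R ∪ Ioi R := (Ioc_union_Ioi_eq_Ioi hR.le).symm
  have hj1 : IntegrableOn (fun _ : ℝ => K * (R ^ (-(d:ℝ) / 2) * R⁻¹) * M) (Ioc 0 R) :=
    integrableOn_const (by simp)
  have hj2 : IntegrableOn (fun t : ℝ => t ^ (-(d:ℝ) / 2) * (M * R⁻¹)) (Ioi R) :=
    (integrableOn_Ioi_rpow_of_lt (by linarith) hR).mul_const _
  have hi1 : IntegrableOn f (Ioc 0 R) := by
    apply Integrable.mono' hj1 (hmeas.mono_measure (Measure.restrict_mono hsub1 le_rfl))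
    filter_upwards [ae_restrict_mem measurableSet_Ioc] with t ht
    rw [Real.norm_of_nonneg (hfnn t ht.1)]
    exact hb1 t ht
  have hi2 : IntegrableOn f (Ioi R) := by
    apply Integrable.mono' hj2 (hmeas.mono_measure (Measure.restrict_mono hsub2 le_rfl))
    filter_upwards [ae_restrict_mem measurableSet_Ioi] with t ht
    rw [Real.norm_of_nonneg (hfnn t (hsub2 ht))]
    exact hb2 t ht
  refine ⟨by rw [hsplit]; exact hi1.union hi2, ?_⟩
  rw [hsplit, setIntegral_union (Ioc_disjoint_Ioi le_rfl) measurableSet_Ioi hi1 hi2]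
  have k1 : ∫ t in Ioc 0 R, f t ≤ K * M * R ^ (-(d:ℝ) / 2) := by
    refine (setIntegral_mono_on hi1 hj1 measurableSet_Ioc hb1).trans ?_
    rw [setIntegral_const, measureReal_def, Real.volume_Ioc, ENNReal.toReal_ofReal (by linarith)]
    apply le_of_eq
    simp; field_simp
  have k2 : ∫ t in Ioi R, f t ≤ 2 * M * R ^ (-(d:ℝ) / 2) := by
    refine (setIntegral_mono_on hi2 hj2 measurableSet_Ioi hb2).trans ?_
    rw [integral_mul_const, integral_Ioi_rpow_of_lt (by linarith) hR,
      Real.rpow_add hR, Real.rpow_one]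
    have hP : 0 < R ^ (-(d:ℝ) / 2) := by positivity
    have e : -(R ^ (-(d:ℝ) / 2) * R) / (-(d:ℝ) / 2 + 1) * (M * R⁻¹)
      = M * R ^ (-(d:ℝ) / 2) / ((d:ℝ) / 2 - 1) := by
      have h1 : (-(d:ℝ) / 2 + 1) = -((d:ℝ) / 2 - 1) := by ring
      have h2 : (d:ℝ) / 2 - 1 ≠ 0 := by linarith
      rw [h1, neg_div_neg_eq]
      field_simp
    rw [e, div_le_iff₀ (by linarith)]
    have : 0 < M * R ^ (-(d:ℝ) / 2) := by positivity
    nlinarith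
  linarith

/-- The Green function profile of the geometric `β`-stable process satisfies
`g(r) ≍ r^{-d} (log(1/r))^{-2}` as `r → 0+`. -/
theorem geometric_stable_green_asymp
    (β : ℝ) (hβ0 : 0 < β) (hβ2 : β ≤ 2)
    (u : ℝ → ℝ)
    (hupos : ∀ t, 0 < t → 0 < u t)
    (hudec : ∀ s t, 0 < s → s ≤ t → u t ≤ u s)
    (hu : ∀ l, 0 < l → ∫ t in Ioi (0:ℝ), Real.exp (-(l * t)) * u t =
      1 / Real.log (1 + l ^ (β / 2)))
    (d : ℕ) (hd : 3 ≤ d)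
    (g : ℝ → ℝ)
    (hg : ∀ r, 0 < r → g r =
      ∫ t in Ioi (0:ℝ), (4 * Real.pi * t) ^ (-(d:ℝ) / 2) * Real.exp (-(r ^ 2 / (4 * t))) * u t) :
    ∃ c C r₀ : ℝ, 0 < c ∧ c ≤ C ∧ 0 < r₀ ∧ ∀ r, 0 < r → r < r₀ →
      c * (r ^ (-(d:ℝ)) / Real.log (1 / r) ^ 2) ≤ g r ∧
      g r ≤ C * (r ^ (-(d:ℝ)) / Real.log (1 / r) ^ 2) := by
  obtain ⟨C, hC, hU⟩ := gs_u_upper (β / 2) (by positivity) u hupos hudec hu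
  obtain ⟨c, t₀, hc, ht₀, ht₀2, hLo⟩ := gs_u_lower (β / 2) (by positivity) u hupos hudec hu
  have hpi := Real.pi_pos
  set c' : ℝ := (8 * Real.pi) ^ (-(d:ℝ) / 2) * Real.exp (-(1/4)) * (c / 8) with hc'
  set C' : ℝ := (4 ^ (d + 1) * (d + 1).factorial + 2) * (C / 4) with hC'
  have hc'0 : 0 < c' := by positivity
  have key : ∀ r, 0 < r → r < t₀ / 2 →
      c' * (r ^ (-(d:ℝ)) / Real.log (1 / r) ^ 2) ≤ g r ∧
      g r ≤ C' * (r ^ (-(d:ℝ)) / Real.log (1 / r) ^ 2) := by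
    intro r hr hrt
    have hr4 : r < 1 / 4 := by linarith
    have hL : 0 < Real.log (1 / r) := by
      apply Real.log_pos; rw [lt_div_iff₀ hr]; linarith
    have hR : 0 < r ^ 2 := by positivity
    have hlogR : Real.log (1 / r ^ 2) = 2 * Real.log (1 / r) := by
      rw [← one_div_pow, Real.log_pow]; norm_num
    have hRpow : (r ^ 2) ^ (-(d:ℝ) / 2) = r ^ (-(d:ℝ)) := by
      rw [← Real.rpow_natCast r 2, ← Real.rpow_mul hr.le]
      congr 1; push_cast; ring
    obtain ⟨hint, hup⟩ := gs_g_bound u hupos hudec d hd (r ^ 2)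
      (C / (4 * Real.log (1 / r) ^ 2)) hR (by
        intro t ht htr
        refine (hU t ht (by nlinarith)).trans ?_
        have h1 : 2 * Real.log (1 / r) ≤ Real.log (1 / t) := by
          rw [← hlogR]; gcongr
        have h2 : 4 * Real.log (1 / r) ^ 2 ≤ Real.log (1 / t) ^ 2 := by nlinarith
        calc _ ≤ C / (t * (4 * Real.log (1 / r) ^ 2)) := by gcongr
          _ = _ := by field_simp)
    rw [hg r hr]
    constructor
    · have hsub : Ioc (r ^ 2) (2 * r ^ 2) ⊆ Ioi (0:ℝ) := fun s hs => hR.trans hs.1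
      have h2R : 2 * r ^ 2 ≤ t₀ := by nlinarith
      have hlog2 : 0 < Real.log (1 / (2 * r ^ 2)) := by
        apply Real.log_pos; rw [lt_div_iff₀ (by positivity)]; nlinarith
      have hlog3 : Real.log (1 / (2 * r ^ 2)) ≤ 2 * Real.log (1 / r) := by
        rw [← hlogR]; gcongr; linarith
      have hu2 : c / (8 * r ^ 2 * Real.log (1 / r) ^ 2) ≤ u (2 * r ^ 2) := by
        refine le_trans ?_ (hLo _ (by positivity) h2R)
        have : Real.log (1 / (2 * r ^ 2)) ^ 2 ≤ 4 * Real.log (1 / r) ^ 2 := by nlinarith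
        calc _ = c / (2 * r ^ 2 * (4 * Real.log (1 / r) ^ 2)) := by ring_nf
          _ ≤ _ := by gcongr
      set q : ℝ := (8 * Real.pi * r ^ 2) ^ (-(d:ℝ) / 2) * Real.exp (-(1/4)) * u (2 * r ^ 2) with hq
      calc c' * (r ^ (-(d:ℝ)) / Real.log (1 / r) ^ 2)
          = (8 * Real.pi * r ^ 2) ^ (-(d:ℝ) / 2) * Real.exp (-(1/4)) *
            (c / (8 * r ^ 2 * Real.log (1 / r) ^ 2)) * r ^ 2 := by
            rw [Real.mul_rpow (by positivity) hR.le, hRpow, hc']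
            field_simp
        _ ≤ q * r ^ 2 := by rw [hq]; gcongr
        _ = ∫ s in Ioc (r ^ 2) (2 * r ^ 2), q := by
            rw [setIntegral_const, measureReal_def, Real.volume_Ioc,
              ENNReal.toReal_ofReal (by linarith), smul_eq_mul]
            ring
        _ ≤ ∫ t in Ioc (r ^ 2) (2 * r ^ 2),
            (4 * Real.pi * t) ^ (-(d:ℝ) / 2) * Real.exp (-(r ^ 2 / (4 * t))) * u t := by
            apply setIntegral_mono_on (by simp) (hint.mono_set hsub) measurableSet_Ioc
            intro t ht
            have ht0 : 0 < t := hsub ht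
            have i1 : (8 * Real.pi * r ^ 2) ^ (-(d:ℝ) / 2) ≤ (4 * Real.pi * t) ^ (-(d:ℝ) / 2) := by
              apply Real.rpow_le_rpow_of_nonpos (by positivity)
              · nlinarith [ht.2]
              · have : (0:ℝ) ≤ d := by positivity
                linarith
            have i2 : Real.exp (-(1/4)) ≤ Real.exp (-(r ^ 2 / (4 * t))) := by
              apply Real.exp_le_exp.2
              have : r ^ 2 / (4 * t) ≤ 1 / 4 := by
                rw [div_le_div_iff₀ (by positivity) (by norm_num)]; linarith [ht.1]
              linarith
            have i3 := hudec t (2 * r ^ 2) ht0 ht.2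
            have := hupos (2 * r ^ 2) (by positivity)
            rw [hq]; gcongr
        _ ≤ _ := by
            apply setIntegral_mono_set hint _ (LE.le.eventuallyLE hsub)
            filter_upwards [ae_restrict_mem measurableSet_Ioi] with s hs
            have hs : 0 < s := hs
            have := hupos s hs
            simp only [Pi.zero_apply]
            positivity
    · refine hup.trans (le_of_eq ?_)
      rw [hRpow, hC']
      field_simp
  refine ⟨c', C', t₀ / 2, hc'0, ?_, by positivity, key⟩
  obtain ⟨h1, h2⟩ := key (t₀ / 4) (by positivity) (by linarith)
  have hL : 0 < Real.log (1 / (t₀ / 4)) := by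
    apply Real.log_pos; rw [lt_div_iff₀ (by positivity)]; linarith
  exact le_of_mul_le_mul_right (h1.trans h2) (by positivity)
end
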